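/- Let 𝒮₀ be a nonempty decreasing subset of 𝒮 with 𝒮₀≠𝒮. Then inf_{μ∈𝒞(𝒮₀)} Λ_{δ,𝒮₀}(μ) ∈ (0,∞), and lim_{n→∞} (1/n)·log P_{v₁}(T_{𝒮₀}>n) = −inf_{μ∈𝒞(𝒮₀)} Λ_{δ,𝒮₀}(μ). -/

import Mathlib

open scoped BigOperators Classical ENNReal
open Filter Topology

noncomputable section
namespace ORRW

/-- Probability measures on a finite type `A`, topologized as a subset of `ℝ^A`. -/
abbrev ProbMeas (A : Type) [Fintype A] : Type :=
  {p : A → ℝ // (∀ a, 0 ≤ p a) ∧ ∑ a, p a = 1}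

/-- Relative entropy `R(γ‖ρ)` between two finitely supported "rows", valued in `EReal`,
with `+∞` when absolute continuity fails. -/
def relEnt {A : Type} [Fintype A] (γ ρ : A → ℝ) : EReal :=
  if ∀ a, ρ a = 0 → γ a = 0 then ((∑ a, γ a * Real.log (γ a / ρ a) : ℝ) : EReal)
  else (⊤ : EReal)

/-- `∫ R(q‖p) dν = Σ_a ν(a) · R(q(a,·)‖p(a,·))`. -/
def relEntInt {A : Type} [Fintype A] (ν : A → ℝ) (q p : A → A → ℝ) : EReal :=
  ∑ a, (ν a : EReal) * relEnt (q a) (p a)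

/-- `ν` is an invariant measure of the kernel `q`. -/
def Invariant {A : Type} [Fintype A] (ν : A → ℝ) (q : A → A → ℝ) : Prop :=
  ∀ y, ∑ x, ν x * q x y = ν y

/-- Extended-real logarithm: `⊥` at nonpositive arguments. -/
def elog (x : ℝ) : EReal := if x ≤ 0 then (⊥ : EReal) else ((Real.log x : ℝ) : EReal)

/-- Empirical measure of a finite trajectory `f : Fin (n+1) → A`. -/
def empMeas {A : Type} [Fintype A] [DecidableEq A] (n : ℕ) (f : Fin (n + 1) → A) :
    ProbMeas A :=
  ⟨fun a => ((Finset.univ.filter (fun i => f i = a)).card : ℝ) / (n + 1),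
    fun a => by positivity, by
      have key : ∑ a : A, ((Finset.univ.filter (fun i => f i = a)).card) = n + 1 := by
        have h := Finset.card_eq_sum_card_fiberwise
          (s := (Finset.univ : Finset (Fin (n + 1)))) (t := (Finset.univ : Finset A))
          (f := f) (fun i _ => Finset.mem_univ (f i))
        simpa using h.symm
      have key' : ∑ a : A, (((Finset.univ.filter (fun i => f i = a)).card : ℝ)) = (n : ℝ) + 1 := by
        have h2 := congrArg (fun m : ℕ => (m : ℝ)) key
        push_cast at h2
        simpa using h2
      rw [← Finset.sum_div, key', div_self (by positivity)]⟩

section Graph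

variable {V : Type} [Fintype V] [DecidableEq V]

/-- Weight of an edge given the set `F` of already traversed edges. -/
def gw (δ : ℝ) (F : Finset (Sym2 V)) (e : Sym2 V) : ℝ := if e ∈ F then δ else 1

/-- The transition kernel `p̂_F` on `V`. -/
def phat (G : SimpleGraph V) [DecidableRel G.Adj] (δ : ℝ) (F : Finset (Sym2 V))
    (x y : V) : ℝ :=
  if G.Adj x y then gw δ F s(x, y) / ∑ z ∈ G.neighborFinset x, gw δ F s(x, z) else 0

/-- Two edges are adjacent iff they share a vertex. -/
def edgeAdj (e e' : Sym2 V) : Prop := ∃ v, v ∈ e ∧ v ∈ e'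

/-- `x` is a vertex of the edge set `F`. -/
def memVerts (F : Finset (Sym2 V)) (x : V) : Prop := ∃ e ∈ F, x ∈ e

/-- `𝒯_G`: stochastic matrices on `V` adapted to `G`. -/
def TG (G : SimpleGraph V) : Set (V → V → ℝ) :=
  {q | (∀ x y, 0 ≤ q x y) ∧ (∀ x, ∑ y, q x y = 1) ∧ ∀ x y, q x y ≠ 0 → G.Adj x y}

/-- `𝒯(F)`: stochastic kernels from the vertex set of `F` to `V`, supported on `F`. -/
def TE (F : Finset (Sym2 V)) : Set (V → V → ℝ) :=
  {q | (∀ x y, 0 ≤ q x y) ∧ (∀ x, memVerts F x → ∑ y, q x y = 1) ∧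
    ∀ x y, q x y ≠ 0 → s(x, y) ∈ F}

/-- `ℰ`: admissible increasing sequences of traversed edge sets. -/
def seqE (G : SimpleGraph V) [DecidableRel G.Adj] (v₁ : V) :
    Set (Fin G.edgeFinset.card → Finset (Sym2 V)) :=
  {Es | (∀ k, Es k ⊆ G.edgeFinset) ∧ (∀ k, (Es k).card = (k : ℕ) + 1) ∧
    (∀ k l : Fin G.edgeFinset.card, (k : ℕ) + 1 = (l : ℕ) → Es k ⊂ Es l) ∧
    (∀ k : Fin G.edgeFinset.card, (k : ℕ) = 0 → ∃ e ∈ Es k, v₁ ∈ e) ∧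
    (∀ k l : Fin G.edgeFinset.card, (k : ℕ) + 1 = (l : ℕ) →
      ∀ e ∈ Es l \ Es k, ∃ e' ∈ Es k, edgeAdj e e')}

/-- The rate function `I_δ`. -/
def Ifun (G : SimpleGraph V) [DecidableRel G.Adj] (v₁ : V) (δ : ℝ) (ν : ProbMeas V) : EReal :=
  sInf { c : EReal |
    ∃ (νs : Fin G.edgeFinset.card → ProbMeas V) (r : Fin G.edgeFinset.card → ℝ)
      (Es : Fin G.edgeFinset.card → Finset (Sym2 V))
      (qs : Fin G.edgeFinset.card → V → V → ℝ),
      Es ∈ seqE G v₁ ∧ (∀ k, 0 ≤ r k) ∧ (∑ k, r k = 1) ∧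
      (∀ k x, (νs k).1 x ≠ 0 → memVerts (Es k) x) ∧
      (∀ x, ∑ k, r k * (νs k).1 x = ν.1 x) ∧
      (∀ k, qs k ∈ TE (Es k)) ∧ (∀ k, Invariant (νs k).1 (qs k)) ∧
      c = ∑ k, ((r k : ℝ) : EReal) * relEntInt (νs k).1 (qs k) (phat G δ (Es k)) }

/-- Edges traversed along a path, given as a list of consecutively visited vertices. -/
def pathEdges : List V → Finset (Sym2 V)
  | [] => ∅
  | [_] => ∅
  | x :: y :: t => insert s(x, y) (pathEdges (y :: t))

/-- Product of one-step ORRW transition probabilities along a trajectory,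
the trajectory being listed in reverse chronological order. -/
def stepsProb (G : SimpleGraph V) [DecidableRel G.Adj] (δ : ℝ) : List V → ℝ
  | [] => 1
  | [_] => 1
  | y :: x :: t => phat G δ (pathEdges (x :: t).reverse) x y * stepsProb G δ (x :: t)

/-- The law of `(X_0, …, X_n)` for the `δ`-ORRW started at `v₁`. -/
def trajProb (G : SimpleGraph V) [DecidableRel G.Adj] (δ : ℝ) (v₁ : V) (n : ℕ)
    (f : Fin (n + 1) → V) : ℝ :=
  if f 0 = v₁ then stepsProb G δ (List.ofFn f).reverse else 0

/-- `P_{v₁}(L_{n+1} ∈ C)`: the probability that the empirical measure of the first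
`n+1` positions of the `δ`-ORRW lies in `C`. -/
def probEmp (G : SimpleGraph V) [DecidableRel G.Adj] (δ : ℝ) (v₁ : V) (n : ℕ)
    (C : Set (ProbMeas V)) : ℝ :=
  ∑ f : Fin (n + 1) → V, if empMeas n f ∈ C then trajProb G δ v₁ n f else 0

/-- The family `𝒮` of edge sets of connected subgraphs having an edge at `v₁`. -/
def scrS (G : SimpleGraph V) [DecidableRel G.Adj] (v₁ : V) : Set (Finset (Sym2 V)) :=
  {F | F ⊆ G.edgeFinset ∧ (∃ e ∈ F, v₁ ∈ e) ∧
    ∀ x y : V, memVerts F x → memVerts F y →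
      (SimpleGraph.fromEdgeSet (↑F : Set (Sym2 V))).Reachable x y}

/-- `𝒮₀` is a decreasing subset of `𝒮`. -/
def DecreasingIn (G : SimpleGraph V) [DecidableRel G.Adj] (v₁ : V)
    (S0 : Set (Finset (Sym2 V))) : Prop :=
  ∀ F₁ F₂, F₁ ∈ scrS G v₁ → F₂ ∈ scrS G v₁ → F₁ ⊆ F₂ → F₂ ∈ S0 → F₁ ∈ S0

/-- `P_{v₁}(T_{𝒮₀} > n)`. -/
def probTgt (G : SimpleGraph V) [DecidableRel G.Adj] (δ : ℝ) (v₁ : V)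
    (S0 : Set (Finset (Sym2 V))) (n : ℕ) : ℝ :=
  ∑ f : Fin (n + 1) → V,
    if ∀ k, 1 ≤ k → k ≤ n → pathEdges ((List.ofFn f).take (k + 1)) ∈ S0 then
      trajProb G δ v₁ n f
    else 0

/-- `P_{v₁}(C_E > n)` for the edge cover time `C_E`. -/
def probCgt (G : SimpleGraph V) [DecidableRel G.Adj] (δ : ℝ) (v₁ : V) (n : ℕ) : ℝ :=
  ∑ f : Fin (n + 1) → V,
    if ¬ G.edgeFinset ⊆ pathEdges (List.ofFn f) then trajProb G δ v₁ n f else 0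

/-- `E_{v₁}[exp (α T_{𝒮₀})]`, valued in `ℝ≥0∞`; the stopping time takes values in
`{1, 2, …} ∪ {∞}`. -/
def expT (G : SimpleGraph V) [DecidableRel G.Adj] (δ : ℝ) (v₁ : V)
    (S0 : Set (Finset (Sym2 V))) (α : ℝ) : ℝ≥0∞ :=
  (∑' n : ℕ, ENNReal.ofReal
      (Real.exp (α * (n + 1)) * (probTgt G δ v₁ S0 n - probTgt G δ v₁ S0 (n + 1)))) +
    (if 0 < α then (⊤ : ℝ≥0∞) else if α = 0 then 1 else 0) *
      ENNReal.ofReal (⨅ n : ℕ, probTgt G δ v₁ S0 n)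

/-- `E_{v₁}[exp (α C_E)]`, valued in `ℝ≥0∞`. -/
def expC (G : SimpleGraph V) [DecidableRel G.Adj] (δ : ℝ) (v₁ : V) (α : ℝ) : ℝ≥0∞ :=
  (∑' n : ℕ, ENNReal.ofReal
      (Real.exp (α * (n + 1)) * (probCgt G δ v₁ n - probCgt G δ v₁ (n + 1)))) +
    (if 0 < α then (⊤ : ℝ≥0∞) else if α = 0 then 1 else 0) *
      ENNReal.ofReal (⨅ n : ℕ, probCgt G δ v₁ n)

/-- The critical exponent `α_c(δ)` attached to a family `𝒮₀` of edge sets. -/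
def alphaC (G : SimpleGraph V) [DecidableRel G.Adj] (δ : ℝ)
    (S0 : Set (Finset (Sym2 V))) : EReal :=
  sInf { c : EReal | ∃ (ν : ProbMeas V) (F : Finset (Sym2 V)) (q : V → V → ℝ),
    F ∈ S0 ∧ q ∈ TE F ∧ (∀ x, ν.1 x ≠ 0 → memVerts F x) ∧ Invariant ν.1 q ∧
    c = relEntInt ν.1 q (phat G δ F) }

/-- `α_c^1(δ)`: the critical exponent for the cover time. -/
def alphaC1 (G : SimpleGraph V) [DecidableRel G.Adj] (v₁ : V) (δ : ℝ) : EReal :=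
  alphaC G δ (scrS G v₁ \ {G.edgeFinset})

end Graph

section Lifted

variable {V : Type} [Fintype V] [LinearOrder V]

/-- Smaller endpoint of an unordered pair. -/
def sym2lo (e : Sym2 V) : V := Sym2.lift ⟨fun a b => min a b, fun a b => min_comm a b⟩ e

/-- Larger endpoint of an unordered pair. -/
def sym2hi (e : Sym2 V) : V := Sym2.lift ⟨fun a b => max a b, fun a b => max_comm a b⟩ e

/-- `V_S = E × {-1, 1}`: vertex set of the lifted directed graph `S`
(`true` plays the role of `+1`). -/
abbrev VSet (G : SimpleGraph V) [DecidableRel G.Adj] : Type :=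
  {e : Sym2 V // e ∈ G.edgeFinset} × Bool

/-- Tail `z⁻` of an oriented edge. -/
def zm (G : SimpleGraph V) [DecidableRel G.Adj] (z : VSet G) : V :=
  if z.2 then sym2lo z.1.1 else sym2hi z.1.1

/-- Head `z⁺` of an oriented edge. -/
def zp (G : SimpleGraph V) [DecidableRel G.Adj] (z : VSet G) : V :=
  if z.2 then sym2hi z.1.1 else sym2lo z.1.1

/-- The kernel `p_F` on the lifted directed graph `S`. -/
def pS (G : SimpleGraph V) [DecidableRel G.Adj] (δ : ℝ) (F : Finset (Sym2 V))
    (z₁ z₂ : VSet G) : ℝ :=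
  if zp G z₁ = zm G z₂ then
    gw δ F z₂.1.1 / ∑ w : VSet G, (if zp G z₁ = zm G w then gw δ F w.1.1 else 0)
  else 0

/-- `𝒯_S`: stochastic matrices on `V_S` moving along orientations. -/
def TS (G : SimpleGraph V) [DecidableRel G.Adj] : Set (VSet G → VSet G → ℝ) :=
  {q | (∀ z w, 0 ≤ q z w) ∧ (∀ z, ∑ w, q z w = 1) ∧ ∀ z w, q z w ≠ 0 → zp G z = zm G w}

/-- `𝒞(𝒮₀)`: probability measures on `V_S` whose first marginal is supported in
some member of `𝒮₀`. -/
def CC (G : SimpleGraph V) [DecidableRel G.Adj] (S0 : Set (Finset (Sym2 V))) :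
    Set (ProbMeas (VSet G)) :=
  {μ | ∃ F ∈ S0, ∀ z : VSet G, μ.1 z ≠ 0 → z.1.1 ∈ F}

/-- `Λ_{δ,𝒮₀}`. -/
def Lam (G : SimpleGraph V) [DecidableRel G.Adj] (v₁ : V) (δ : ℝ)
    (S0 : Set (Finset (Sym2 V))) (μ : ProbMeas (VSet G)) : EReal :=
  sInf { c : EReal |
    ∃ (μs : Fin G.edgeFinset.card → ProbMeas (VSet G)) (r : Fin G.edgeFinset.card → ℝ)
      (Es : Fin G.edgeFinset.card → Finset (Sym2 V))
      (qs : Fin G.edgeFinset.card → VSet G → VSet G → ℝ),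
      Es ∈ seqE G v₁ ∧ (∀ k, 0 ≤ r k) ∧ (∀ k, Es k ∉ S0 → r k = 0) ∧ (∑ k, r k = 1) ∧
      (∀ k z, (μs k).1 z ≠ 0 → z.1.1 ∈ Es k) ∧
      (∀ z, ∑ k, r k * (μs k).1 z = μ.1 z) ∧
      (∀ k, qs k ∈ TS G) ∧ (∀ k, Invariant (μs k).1 (qs k)) ∧
      c = ∑ k, ((r k : ℝ) : EReal) * relEntInt (μs k).1 (qs k) (pS G δ (Es k)) }

/-- `Λ^z_{δ,𝒮₀}`. -/
def LamZ (G : SimpleGraph V) [DecidableRel G.Adj] (v₁ : V) (δ : ℝ)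
    (S0 : Set (Finset (Sym2 V))) (z : VSet G) (μ : ProbMeas (VSet G)) : EReal :=
  sInf { c : EReal |
    ∃ (μs : Fin G.edgeFinset.card → ProbMeas (VSet G)) (r : Fin G.edgeFinset.card → ℝ)
      (Es : Fin G.edgeFinset.card → Finset (Sym2 V))
      (qs : Fin G.edgeFinset.card → VSet G → VSet G → ℝ),
      Es ∈ seqE G v₁ ∧ (∀ k : Fin G.edgeFinset.card, (k : ℕ) = 0 → Es k = {z.1.1}) ∧
      (∀ k, 0 ≤ r k) ∧ (∀ k, Es k ∉ S0 → r k = 0) ∧ (∑ k, r k = 1) ∧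
      (∀ k w, (μs k).1 w ≠ 0 → w.1.1 ∈ Es k) ∧
      (∀ w, ∑ k, r k * (μs k).1 w = μ.1 w) ∧
      (∀ k, qs k ∈ TS G) ∧ (∀ k, Invariant (μs k).1 (qs k)) ∧
      c = ∑ k, ((r k : ℝ) : EReal) * relEntInt (μs k).1 (qs k) (pS G δ (Es k)) }

/-- `Λ₁`: the Donsker–Varadhan functional for the simple random walk on `S`
(whose kernel is `pS` with `δ = 1`). -/
def Lam1 (G : SimpleGraph V) [DecidableRel G.Adj] (μ : ProbMeas (VSet G)) : EReal :=
  sInf { c : EReal | ∃ q ∈ TS G, Invariant μ.1 q ∧ c = relEntInt μ.1 q (pS G 1 ∅) }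

/-- Boundary `∂F` of an edge set: edges of `F` adjacent to some edge outside `F`. -/
def bdry (G : SimpleGraph V) [DecidableRel G.Adj] (F : Finset (Sym2 V)) : Finset (Sym2 V) :=
  F.filter fun e => ∃ e' ∈ G.edgeFinset \ F, edgeAdj e e'

/-- Out-degree `d(z)` of `z` in `S`. -/
def outDeg (G : SimpleGraph V) [DecidableRel G.Adj] (z : VSet G) : ℕ :=
  (Finset.univ.filter (fun w : VSet G => zp G z = zm G w)).card

/-- Number `k(z)` of out-neighbours of `z` lying in `F × {-1, 1}`. -/
def outDegIn (G : SimpleGraph V) [DecidableRel G.Adj] (F : Finset (Sym2 V))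
    (z : VSet G) : ℕ :=
  (Finset.univ.filter (fun w : VSet G => zp G z = zm G w ∧ w.1.1 ∈ F)).card

/-- The law of `(Z_0, …, Z_n)` for the lifted `δ`-ORRW conditioned on `Z_0 = z`. -/
def liftTraj (G : SimpleGraph V) [DecidableRel G.Adj] (δ : ℝ) (z : VSet G) (n : ℕ)
    (g : Fin (n + 1) → VSet G) : ℝ :=
  if g 0 = z then
    ∏ i : Fin n,
      pS G δ ((Finset.Iic i.castSucc).image (fun j => (g j).1.1))
        (g i.castSucc) (g i.succ)
  else 0

/-- The restricted logarithmic Laplace functional `W^{n+1}_{𝒮₀}(z)`. -/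
def Wres (G : SimpleGraph V) [DecidableRel G.Adj] (δ : ℝ) (z : VSet G)
    (S0 : Set (Finset (Sym2 V))) (h : ProbMeas (VSet G) → ℝ) (n : ℕ) : EReal :=
  if 0 < ∑ g : Fin (n + 1) → VSet G,
      (if empMeas n g ∈ CC G S0 then liftTraj G δ z n g else 0) then
    ((-((((n : ℝ) + 1))⁻¹ * Real.log (∑ g : Fin (n + 1) → VSet G,
      if empMeas n g ∈ CC G S0 then
        Real.exp (-((n : ℝ) + 1) * h (empMeas n g)) * liftTraj G δ z n g
      else 0)) : ℝ) : EReal)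
  else (⊤ : EReal)

end Lifted

/-!
While the traversed edge set is `F`, the walk is a Markov chain killed on leaving `F`. That killed
kernel is reversible, hence has a nonnegative eigenfunction `φ_F` with eigenvalue `ρ_F > 0`, and
`ρ_F < 1` unless `F` is the full edge set. Both the infimum of `Λ` and the decay rate equal
`-log max_{F ∈ 𝒮₀} ρ_F`.

* Staying forever on the optimal `F`, once it has been traversed, bounds the tail below by
  `c ρ_F ^ n`. For `r > max ρ_F` and `m > 0` small, `(x, F) ↦ m ^ |F| φ_F(x)` is a supersolution
  with factor `r`, since each new edge costs a factor `m`; so the tail is at most `C r ^ n`.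
* By Gibbs' inequality every stationary `q` living on `F` has entropy rate at least `-log ρ_F`
  against the reinforced kernel, and the Doob transform of the killed kernel by `φ_F` attains it.
  `Λ` mixes such rates over an admissible chain of edge sets, and every `F ∈ 𝒮₀` lies on one.
-/

/-! ### Exponential growth rates -/

lemma tendsto_log_div_of_geometric_bounds {p : ℕ → ℝ} {ρ : ℝ} (hρ : 0 < ρ)
    (lower : ∃ c > 0, ∀ᶠ n in atTop, c * ρ ^ n ≤ p n)
    (upper : ∀ r > ρ, ∃ C > 0, ∀ᶠ n in atTop, p n ≤ C * r ^ n) :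
    Tendsto (fun n : ℕ => Real.log (p n) / n) atTop (𝓝 (Real.log ρ)) := by
  have log_geometric : ∀ c > 0, ∀ r > 0, ∀ n : ℕ, n ≠ 0 →
      Real.log (c * r ^ n) / n = Real.log c / n + Real.log r := by
    intro c hc r hr n hn
    rw [Real.log_mul hc.ne' (pow_pos hr n).ne', Real.log_pow]
    field_simp
  have log_geometric_tendsto : ∀ c r : ℝ,
      Tendsto (fun n : ℕ => Real.log c / n + Real.log r) atTop (𝓝 (Real.log r)) := fun c r => by
    simpa using (tendsto_const_div_atTop_nhds_zero_nat (Real.log c)).add_const (Real.log r)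
  obtain ⟨c, hc, lower⟩ := lower
  refine tendsto_order.2 ⟨fun a ha => ?_, fun a ha => ?_⟩
  · filter_upwards [(log_geometric_tendsto c ρ).eventually_const_lt ha, lower,
      eventually_ne_atTop 0] with n han hn hn0
    rw [← log_geometric c hc ρ hρ n hn0] at han
    exact han.trans_le (by gcongr)
  · obtain ⟨s, hs, hsa⟩ := exists_between ha
    obtain ⟨C, hC, upper⟩ := upper (Real.exp s) ((Real.log_lt_iff_lt_exp hρ).1 hs)
    have hsa' : Real.log (Real.exp s) < a := by rwa [Real.log_exp]
    filter_upwards [(log_geometric_tendsto C (Real.exp s)).eventually_lt_const hsa', lower, upper,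
      eventually_ne_atTop 0] with n han hln hun hn0
    rw [← log_geometric C hC _ (Real.exp_pos s) n hn0] at han
    have hpn : 0 < p n := (mul_pos hc (pow_pos hρ n)).trans_le hln
    exact lt_of_le_of_lt (by gcongr) han

/-! ### Perron pairs of finite kernels -/

section Perron

variable {A : Type*} [Fintype A]

open Matrix in
lemma dotProduct_mulVec_le_abs {M : Matrix A A ℝ} (hM : ∀ x y, 0 ≤ M x y) (v : A → ℝ) :
    v ⬝ᵥ M *ᵥ v ≤ |v| ⬝ᵥ M *ᵥ |v| := by
  simp only [dotProduct, mulVec, Finset.mul_sum, Pi.abs_apply]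
  refine Finset.sum_le_sum fun x _ => Finset.sum_le_sum fun y _ => ?_
  calc v x * (M x y * v y) ≤ |v x * (M x y * v y)| := le_abs_self _
    _ = |v x| * (M x y * |v y|) := by rw [abs_mul, abs_mul, abs_of_nonneg (hM x y)]

open Matrix in
lemma one_dotProduct_mulVec_one_pos {M : Matrix A A ℝ} (hM : ∀ x y, 0 ≤ M x y)
    (hpos : ∃ x y, 0 < M x y) : 0 < (1 : A → ℝ) ⬝ᵥ M *ᵥ 1 := by
  obtain ⟨x, y, hxy⟩ := hpos
  simp only [dotProduct, mulVec, Pi.one_apply, mul_one, one_mul]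
  exact Finset.sum_pos' (fun x _ => Finset.sum_nonneg fun y _ => hM x y)
    ⟨x, Finset.mem_univ x,
      Finset.sum_pos' (fun y _ => hM x y) ⟨y, Finset.mem_univ y, hxy⟩⟩

open Matrix WithLp in
/-- The maximizer of the quadratic form on a sphere may be taken nonnegative, and a maximizer is
an eigenvector. -/
lemma exists_nonneg_eigenvector_of_isSymm {M : Matrix A A ℝ} (hsymm : M.IsSymm)
    (hM : ∀ x y, 0 ≤ M x y) (hpos : ∃ x y, 0 < M x y) :
    ∃ (ψ : A → ℝ) (ρ : ℝ), 0 ≤ ψ ∧ ψ ≠ 0 ∧ 0 < ρ ∧ M *ᵥ ψ = ρ • ψ := by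
  set T := toEuclideanCLM (n := A) (𝕜 := ℝ) M
  have form_toLp : ∀ v : A → ℝ, T.reApplyInnerSelf (toLp 2 v) = v ⬝ᵥ M *ᵥ v := fun v => by
    rw [ContinuousLinearMap.reApplyInnerSelf_apply, real_inner_comm]
    exact inner_toEuclideanCLM M _ _
  have hT : IsSelfAdjoint T := by
    rw [IsSelfAdjoint, ← map_star, star_eq_conjTranspose, conjTranspose_eq_transpose_of_trivial,
      hsymm.eq]
  set one : EuclideanSpace ℝ A := toLp 2 1
  obtain ⟨v, hv, hvmax⟩ := (isCompact_sphere (0 : EuclideanSpace ℝ A) ‖one‖).exists_isMaxOn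
    ⟨one, by simp⟩ T.reApplyInnerSelf_continuous.continuousOn
  set ψ : EuclideanSpace ℝ A := toLp 2 |ofLp v|
  have norm_ψ : ‖ψ‖ = ‖one‖ := by
    rw [← mem_sphere_zero_iff_norm.1 hv]
    simp [ψ, EuclideanSpace.norm_eq]
  have hψmax : IsMaxOn T.reApplyInnerSelf (Metric.sphere 0 ‖ψ‖) ψ := fun w hw =>
    (hvmax (norm_ψ ▸ hw)).trans
      ((dotProduct_mulVec_le_abs hM (ofLp v)).trans_eq' (form_toLp _) |>.trans_eq
        (form_toLp _).symm)
  have form_pos : 0 < T.reApplyInnerSelf ψ :=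
    calc 0 < T.reApplyInnerSelf one :=
          (one_dotProduct_mulVec_one_pos hM hpos).trans_eq (form_toLp 1).symm
      _ ≤ T.reApplyInnerSelf ψ := hψmax (by simp [norm_ψ])
  have ψ_ne : ψ ≠ 0 := fun h => by simp [h, ContinuousLinearMap.reApplyInnerSelf_apply] at form_pos
  have eigen := hT.eq_smul_self_of_isLocalExtrOn_real (Or.inr hψmax.localize)
  refine ⟨|ofLp v|, T.rayleighQuotient ψ, abs_nonneg _, fun h => ψ_ne (by simp [ψ, h]),
    div_pos form_pos (by positivity), ?_⟩
  exact congrArg ofLp eigen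

/-- `φ` is a nonzero nonnegative eigenfunction of the kernel `K` (not necessarily positive, since
`K` need not be irreducible) and `ρ > 0` is its eigenvalue. -/
structure IsPerronPair (K : A → A → ℝ) (φ : A → ℝ) (ρ : ℝ) : Prop where
  nonneg : ∀ x, 0 ≤ φ x
  exists_pos : ∃ x, 0 < φ x
  eigenvalue_pos : 0 < ρ
  eigen : ∀ x, ∑ y, K x y * φ y = ρ * φ x

/-- Detailed balance: the kernel `K` is reversible with respect to the weights `π`. -/
def Reversible (π : A → ℝ) (K : A → A → ℝ) : Prop :=
  ∀ x y, π x * K x y = π y * K y x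

variable {K p : A → A → ℝ} {φ π : A → ℝ} {ρ : ℝ}

/-- Conjugation by `√π` makes a reversible kernel symmetric. -/
lemma exists_isPerronPair_of_reversible (hπ : ∀ x, 0 < π x) (hrev : Reversible π K)
    (hK : ∀ x y, 0 ≤ K x y) (hpos : ∃ x y, 0 < K x y) :
    ∃ (φ : A → ℝ) (ρ : ℝ), IsPerronPair K φ ρ := by
  have hsqrt : ∀ x, 0 < √(π x) := fun x => Real.sqrt_pos.2 (hπ x)
  let M : Matrix A A ℝ := Matrix.of fun x y => √(π x) * K x y / √(π y)
  have hsymm : M.IsSymm := by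
    ext x y
    simp only [M, Matrix.transpose_apply, Matrix.of_apply]
    rw [div_eq_div_iff (hsqrt x).ne' (hsqrt y).ne']
    calc √(π y) * K y x * √(π y) = √(π y) * √(π y) * K y x := by ring
      _ = √(π x) * √(π x) * K x y := by
        rw [Real.mul_self_sqrt (hπ y).le, Real.mul_self_sqrt (hπ x).le, hrev x y]
      _ = √(π x) * K x y * √(π x) := by ring
  have hM : ∀ x y, 0 ≤ M x y := fun x y =>
    div_nonneg (mul_nonneg (hsqrt x).le (hK x y)) (hsqrt y).le
  have hMpos : ∃ x y, 0 < M x y := by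
    obtain ⟨x, y, hxy⟩ := hpos
    exact ⟨x, y, div_pos (mul_pos (hsqrt x) hxy) (hsqrt y)⟩
  obtain ⟨ψ, ρ, hψ, hψ0, hρ, heigen⟩ := exists_nonneg_eigenvector_of_isSymm hsymm hM hMpos
  obtain ⟨a, ha⟩ := Function.ne_iff.1 hψ0
  refine ⟨fun x => ψ x / √(π x), ρ, fun x => div_nonneg (hψ x) (hsqrt x).le,
    ⟨a, div_pos ((hψ a).lt_of_ne' ha) (hsqrt a)⟩, hρ, fun x => ?_⟩
  have hx : ∑ y, √(π x) * K x y / √(π y) * ψ y = ρ * ψ x := congrFun heigen x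
  rw [mul_div_assoc', eq_div_iff (hsqrt x).ne', ← hx, Finset.sum_mul]
  exact Finset.sum_congr rfl fun y _ => by ring

namespace IsPerronPair

lemma pos_of_pos (h : IsPerronPair K φ ρ) (hK : ∀ x y, 0 ≤ K x y) {x y : A} (hxy : 0 < K x y)
    (hy : 0 < φ y) : 0 < φ x := by
  refine pos_of_mul_pos_right (a := ρ) ?_ h.eigenvalue_pos.le
  rw [← h.eigen x]
  exact Finset.sum_pos' (fun z _ => mul_nonneg (hK x z) (h.nonneg z))
    ⟨y, Finset.mem_univ y, mul_pos hxy hy⟩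

lemma exists_ne_zero_of_pos (h : IsPerronPair K φ ρ) {x : A} (hx : 0 < φ x) :
    ∃ y, K x y ≠ 0 := by
  by_contra! hzero
  have := h.eigen x
  simp only [hzero, zero_mul, Finset.sum_const_zero] at this
  exact (mul_pos h.eigenvalue_pos hx).ne this

/-- Summing the eigenvalue equation against `π` gives `∑ π φ (1 - K1) = (1 - ρ) ∑ π φ`. -/
lemma eigenvalue_lt_one (h : IsPerronPair K φ ρ) (hπ : ∀ x, 0 ≤ π x) (hrev : Reversible π K)
    (hsub : ∀ x, ∑ y, K x y ≤ 1) {v : A} (hφv : 0 < φ v) (hπv : 0 < π v)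
    (hv : ∑ y, K v y < 1) : ρ < 1 := by
  have hmass : 0 < ∑ x, π x * φ x :=
    Finset.sum_pos' (fun x _ => mul_nonneg (hπ x) (h.nonneg x))
      ⟨v, Finset.mem_univ v, mul_pos hπv hφv⟩
  have hlt : ρ * ∑ x, π x * φ x < ∑ x, π x * φ x :=
    calc ρ * ∑ x, π x * φ x = ∑ x, π x * ∑ y, K x y * φ y := by
          rw [Finset.mul_sum]
          exact Finset.sum_congr rfl fun x _ => by rw [h.eigen x]; ring
      _ = ∑ y, ∑ x, π x * K x y * φ y := by
          simp only [Finset.mul_sum, mul_assoc]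
          exact Finset.sum_comm
      _ = ∑ y, π y * φ y * ∑ x, K y x := by
          simp only [Finset.mul_sum]
          exact Finset.sum_congr rfl fun y _ => Finset.sum_congr rfl fun x _ => by
            rw [hrev x y]; ring
      _ < ∑ y, π y * φ y :=
          Finset.sum_lt_sum
            (fun y _ => mul_le_of_le_one_right (mul_nonneg (hπ y) (h.nonneg y)) (hsub y))
            ⟨v, Finset.mem_univ v, mul_lt_of_lt_one_right (mul_pos hπv hφv) hv⟩
  exact (mul_lt_iff_lt_one_left hmass).1 hlt

end IsPerronPair

/-- The Doob transform `K(x,y) φ(y) / (ρ φ(x))` of `K` by an eigenfunction `φ` with eigenvalue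
`ρ`, completed by the rows of `p` where `φ` vanishes. -/
def doobTransform (K p : A → A → ℝ) (φ : A → ℝ) (ρ : ℝ) (x y : A) : ℝ :=
  if φ x = 0 then p x y else K x y * φ y / (ρ * φ x)

namespace IsPerronPair

lemma doobTransform_nonneg (h : IsPerronPair K φ ρ) (hK : ∀ x y, 0 ≤ K x y)
    (hp : ∀ x y, 0 ≤ p x y) (x y : A) : 0 ≤ doobTransform K p φ ρ x y := by
  rw [doobTransform]
  split_ifs
  · exact hp x y
  · exact div_nonneg (mul_nonneg (hK x y) (h.nonneg y))
      (mul_nonneg h.eigenvalue_pos.le (h.nonneg x))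

lemma sum_doobTransform (h : IsPerronPair K φ ρ) (hp : ∀ x, ∑ y, p x y = 1) (x : A) :
    ∑ y, doobTransform K p φ ρ x y = 1 := by
  by_cases hx : φ x = 0
  · simp only [doobTransform, if_pos hx, hp]
  · simp only [doobTransform, if_neg hx]
    rw [← Finset.sum_div, h.eigen x, div_self (mul_ne_zero h.eigenvalue_pos.ne' hx)]

lemma sum_mul_doobTransform (h : IsPerronPair K φ ρ) (hrev : Reversible π K) (y : A) :
    ∑ x, π x * φ x ^ 2 * doobTransform K p φ ρ x y = π y * φ y ^ 2 := by
  have flow : ∀ x, π x * φ x ^ 2 * doobTransform K p φ ρ x y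
      = π y * φ y / ρ * (K y x * φ x) := fun x => by
    have hρ := h.eigenvalue_pos.ne'
    rw [doobTransform]
    split_ifs with hx
    · simp [hx]
    · field_simp
      rw [hrev x y]
      ring
  rw [Finset.sum_congr rfl fun x _ => flow x, ← Finset.mul_sum, h.eigen y]
  have hρ := h.eigenvalue_pos.ne'
  field_simp

end IsPerronPair

end Perron

/-! ### Relative entropy rates -/

lemma ereal_coe_sum {ι : Type*} (s : Finset ι) (f : ι → ℝ) :
    ((∑ i ∈ s, f i : ℝ) : EReal) = ∑ i ∈ s, (f i : EReal) := by
  induction s using Finset.induction_on with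
  | empty => simp
  | insert i s hi ih => rw [Finset.sum_insert hi, Finset.sum_insert hi, EReal.coe_add, ih]

section Entropy

variable {A : Type} [Fintype A] {μ u : A → ℝ} {q p Q K : A → A → ℝ} {ρ : ℝ}

/-- The real number `∫ R(q‖p) dμ`, meaningful when `q` is absolutely continuous with respect
to `p`. -/
def entropyRate (μ : A → ℝ) (q p : A → A → ℝ) : ℝ :=
  ∑ z, μ z * ∑ w, q z w * Real.log (q z w / p z w)

lemma relEntInt_eq_coe_entropyRate (hac : ∀ z w, p z w = 0 → q z w = 0) :
    relEntInt μ q p = (entropyRate μ q p : EReal) := by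
  rw [entropyRate, ereal_coe_sum]
  exact Finset.sum_congr rfl fun z _ => by rw [EReal.coe_mul, relEnt, if_pos (hac z)]

lemma sum_mul_relEntInt_eq_coe {ι : Type*} [Fintype ι] {μs : ι → A → ℝ} {qs ps : ι → A → A → ℝ}
    (r : ι → ℝ) (hac : ∀ i z w, ps i z w = 0 → qs i z w = 0) :
    ∑ i, (r i : EReal) * relEntInt (μs i) (qs i) (ps i)
      = ((∑ i, r i * entropyRate (μs i) (qs i) (ps i) : ℝ) : EReal) := by
  rw [ereal_coe_sum]
  exact Finset.sum_congr rfl fun i _ => by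
    rw [relEntInt_eq_coe_entropyRate (hac i), EReal.coe_mul]

lemma sum_mul_log_div_nonneg {γ ν : A → ℝ} (hγ : ∀ a, 0 ≤ γ a) (hν : ∀ a, 0 ≤ ν a)
    (hac : ∀ a, ν a = 0 → γ a = 0) (hle : ∑ a, ν a ≤ ∑ a, γ a) :
    0 ≤ ∑ a, γ a * Real.log (γ a / ν a) := by
  have hterm : ∀ a, γ a - ν a ≤ γ a * Real.log (γ a / ν a) := fun a => by
    rcases (hγ a).eq_or_lt with ha | ha
    · simp [← ha, hν a]
    · have hνa : 0 < ν a := (hν a).lt_of_ne' fun h => ha.ne' (hac a h)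
      calc γ a - ν a = γ a * (1 - (γ a / ν a)⁻¹) := by field_simp
        _ ≤ γ a * Real.log (γ a / ν a) :=
          mul_le_mul_of_nonneg_left (Real.one_sub_inv_le_log_of_pos (div_pos ha hνa)) ha.le
  calc 0 ≤ ∑ a, (γ a - ν a) := by rw [Finset.sum_sub_distrib]; exact sub_nonneg.2 hle
    _ ≤ _ := Finset.sum_le_sum fun a _ => hterm a

lemma Invariant.ne_zero_of_ne_zero (hinv : Invariant μ q) (hμ : ∀ z, 0 ≤ μ z)
    (hq : ∀ z w, 0 ≤ q z w) {z w : A} (hz : μ z ≠ 0) (hzw : q z w ≠ 0) : μ w ≠ 0 := by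
  rw [← hinv w]
  refine (Finset.sum_pos' (fun x _ => mul_nonneg (hμ x) (hq x w))
    ⟨z, Finset.mem_univ z, ?_⟩).ne'
  exact mul_pos ((hμ z).lt_of_ne' hz) ((hq z w).lt_of_ne' hzw)

lemma Invariant.sum_mul_sub_eq_zero (hinv : Invariant μ q) (hq : ∀ z, ∑ w, q z w = 1)
    (f : A → ℝ) : ∑ z, ∑ w, μ z * q z w * (f w - f z) = 0 := by
  have outflow : ∑ z, ∑ w, μ z * q z w * f z = ∑ z, μ z * f z :=
    Finset.sum_congr rfl fun z _ => by
      rw [← Finset.sum_mul, ← Finset.mul_sum, hq z, mul_one]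
  have inflow : ∑ z, ∑ w, μ z * q z w * f w = ∑ w, μ w * f w := by
    rw [Finset.sum_comm]
    exact Finset.sum_congr rfl fun w _ => by rw [← Finset.sum_mul, hinv w]
  simp only [mul_sub, Finset.sum_sub_distrib, inflow, outflow, sub_self]

/-- Tilting the reference kernel by `u` shifts the entropy rate by a constant, because the
logarithmic increments of `u` cancel under an invariant measure. -/
lemma entropyRate_eq_sub_log_of_tilt (hμ : ∑ z, μ z = 1) (hq : ∀ z, ∑ w, q z w = 1)
    (hinv : Invariant μ q) (hρ : 0 < ρ)
    (htilt : ∀ z w, μ z ≠ 0 → q z w ≠ 0 →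
      p z w ≠ 0 ∧ 0 < u z ∧ 0 < u w ∧ Q z w = p z w * u w / (ρ * u z)) :
    entropyRate μ q p = entropyRate μ q Q - Real.log ρ := by
  have hterm : ∀ z w, μ z * (q z w * Real.log (q z w / p z w))
      = μ z * (q z w * Real.log (q z w / Q z w))
        + μ z * q z w * (Real.log (u w) - Real.log (u z)) - Real.log ρ * (μ z * q z w) := by
    intro z w
    by_cases hz : μ z = 0
    · simp [hz]
    by_cases hzw : q z w = 0
    · simp [hzw]
    obtain ⟨hp, huz, huw, hQ⟩ := htilt z w hz hzw
    have hratio : q z w / p z w = q z w / Q z w * (u w / (ρ * u z)) := by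
      rw [hQ]
      field_simp
    have hQ0 : Q z w ≠ 0 := by
      rw [hQ]
      exact div_ne_zero (mul_ne_zero hp huw.ne') (mul_pos hρ huz).ne'
    rw [hratio, Real.log_mul (div_ne_zero hzw hQ0) (div_pos huw (mul_pos hρ huz)).ne',
      Real.log_div huw.ne' (mul_pos hρ huz).ne', Real.log_mul hρ.ne' huz.ne']
    ring
  have hlogρ : ∑ z, ∑ w, Real.log ρ * (μ z * q z w) = Real.log ρ := by
    simp only [← Finset.mul_sum, hq, mul_one, hμ]
  simp only [entropyRate, Finset.mul_sum, hterm, Finset.sum_add_distrib, Finset.sum_sub_distrib,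
    hinv.sum_mul_sub_eq_zero hq, hlogρ, add_zero]

namespace IsPerronPair

lemma exists_invariant_doobTransform {π : A → ℝ} (h : IsPerronPair K u ρ) (hπ : ∀ z, 0 < π z)
    (hrev : Reversible π K) (p : A → A → ℝ) :
    ∃ ν : ProbMeas A, Invariant ν.1 (doobTransform K p u ρ) ∧ ∀ z, ν.1 z ≠ 0 → 0 < u z := by
  have hmass : 0 < ∑ z, π z * u z ^ 2 := by
    obtain ⟨z, hz⟩ := h.exists_pos
    exact Finset.sum_pos' (fun z _ => mul_nonneg (hπ z).le (sq_nonneg _))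
      ⟨z, Finset.mem_univ z, mul_pos (hπ z) (pow_pos hz 2)⟩
  refine ⟨⟨fun z => π z * u z ^ 2 / ∑ z, π z * u z ^ 2,
    fun z => div_nonneg (mul_nonneg (hπ z).le (sq_nonneg _)) hmass.le, ?_⟩,
    fun w => ?_, fun z hz => ?_⟩
  · rw [← Finset.sum_div, div_self hmass.ne']
  · simp only [div_mul_eq_mul_div]
    rw [← Finset.sum_div, h.sum_mul_doobTransform hrev]
  · exact (h.nonneg z).lt_of_ne' fun hu => hz (by simp [hu])

lemma neg_log_le_entropyRate (h : IsPerronPair K u ρ) (hK : ∀ z w, 0 ≤ K z w)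
    (hμ : ∀ z, 0 ≤ μ z) (hμ1 : ∑ z, μ z = 1) (hq : ∀ z w, 0 ≤ q z w) (hq1 : ∀ z, ∑ w, q z w = 1)
    (hinv : Invariant μ q) (hac : ∀ z w, p z w = 0 → q z w = 0)
    (hu : ∀ z, μ z ≠ 0 → 0 < u z) (hKp : ∀ z w, μ z ≠ 0 → μ w ≠ 0 → K z w = p z w) :
    -Real.log ρ ≤ entropyRate μ q p := by
  let Q : A → A → ℝ := fun z w => K z w * u w / (ρ * u z)
  have hρ := h.eigenvalue_pos
  have htilt : ∀ z w, μ z ≠ 0 → q z w ≠ 0 →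
      p z w ≠ 0 ∧ 0 < u z ∧ 0 < u w ∧ Q z w = p z w * u w / (ρ * u z) := fun z w hz hzw => by
    have hw := hinv.ne_zero_of_ne_zero hμ hq hz hzw
    exact ⟨mt (hac z w) hzw, hu z hz, hu w hw, by simp only [Q, hKp z w hz hw]⟩
  have gibbs : 0 ≤ entropyRate μ q Q := Finset.sum_nonneg fun z _ => by
    by_cases hz : μ z = 0
    · simp [hz]
    have hρu := mul_pos hρ (hu z hz)
    refine mul_nonneg (hμ z) (sum_mul_log_div_nonneg (hq z)
      (fun w => div_nonneg (mul_nonneg (hK z w) (h.nonneg w)) hρu.le) (fun w hQ => ?_) ?_)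
    · by_contra hzw
      obtain ⟨hp, -, huw, hQp⟩ := htilt z w hz hzw
      exact div_ne_zero (mul_ne_zero hp huw.ne') hρu.ne' (hQp ▸ hQ)
    · rw [← Finset.sum_div, h.eigen z, div_self hρu.ne', hq1 z]
  rw [entropyRate_eq_sub_log_of_tilt hμ1 hq1 hinv hρ htilt]
  linarith

lemma entropyRate_doobTransform (h : IsPerronPair K u ρ) (hμ1 : ∑ z, μ z = 1)
    (hp1 : ∀ z, ∑ w, p z w = 1) (hinv : Invariant μ (doobTransform K p u ρ))
    (hu : ∀ z, μ z ≠ 0 → 0 < u z) (hKp : ∀ z w, K z w ≠ 0 → K z w = p z w) :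
    entropyRate μ (doobTransform K p u ρ) p = -Real.log ρ := by
  have self : entropyRate μ (doobTransform K p u ρ) (doobTransform K p u ρ) = 0 := by
    refine Finset.sum_eq_zero fun z _ => mul_eq_zero_of_right _ (Finset.sum_eq_zero fun w _ => ?_)
    rcases eq_or_ne (doobTransform K p u ρ z w) 0 with hzw | hzw <;> simp [hzw]
  rw [entropyRate_eq_sub_log_of_tilt hμ1 (h.sum_doobTransform hp1) hinv h.eigenvalue_pos (u := u)
    (Q := doobTransform K p u ρ), self, zero_sub]
  intro z w hz hzw
  rw [doobTransform, if_neg (hu z hz).ne'] at hzw ⊢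
  obtain ⟨hK0, huw⟩ := mul_ne_zero_iff.1 (div_ne_zero_iff.1 hzw).1
  rw [← hKp z w hK0]
  exact ⟨hK0, hu z hz, (h.nonneg w).lt_of_ne' huw, rfl⟩

end IsPerronPair

end Entropy

/-! ### Growth of powers of nonnegative matrices -/

section MatrixPowers

open Matrix

variable {A : Type*} [Fintype A] {M : Matrix A A ℝ} {L : Set A} {f g Φ Ψ : A → ℝ} {ρ r C : ℝ}

lemma mulVec_le_mulVec_of_le_on (hM : ∀ a b, 0 ≤ M a b) (hL : ∀ a b, M a b ≠ 0 → b ∈ L)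
    (hfg : ∀ b ∈ L, f b ≤ g b) (a : A) : (M *ᵥ f) a ≤ (M *ᵥ g) a := by
  refine Finset.sum_le_sum fun b _ => ?_
  by_cases hab : M a b = 0
  · simp [hab]
  · exact mul_le_mul_of_nonneg_left (hfg b (hL a b hab)) (hM a b)

variable [DecidableEq A]

lemma pow_mulVec_le_on (hM : ∀ a b, 0 ≤ M a b) (hL : ∀ a b, M a b ≠ 0 → b ∈ L) (hr : 0 ≤ r)
    (hC : 0 ≤ C) (hΦ : ∀ b ∈ L, (M *ᵥ Φ) b ≤ r * Φ b) (hf : ∀ b ∈ L, f b ≤ C * Φ b) (n : ℕ) :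
    ∀ b ∈ L, (M ^ n *ᵥ f) b ≤ C * r ^ n * Φ b := by
  induction n with
  | zero => simpa using hf
  | succ n ih =>
    intro b hb
    calc (M ^ (n + 1) *ᵥ f) b = (M *ᵥ (M ^ n *ᵥ f)) b := by rw [pow_succ', mulVec_mulVec]
      _ ≤ (M *ᵥ ((C * r ^ n) • Φ)) b := mulVec_le_mulVec_of_le_on hM hL ih b
      _ = C * r ^ n * (M *ᵥ Φ) b := by rw [mulVec_smul, Pi.smul_apply, smul_eq_mul]
      _ ≤ C * r ^ n * (r * Φ b) :=
          mul_le_mul_of_nonneg_left (hΦ b hb) (mul_nonneg hC (pow_nonneg hr n))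
      _ = C * r ^ (n + 1) * Φ b := by ring

lemma exists_pow_mulVec_le (hM : ∀ a b, 0 ≤ M a b) (hL : ∀ a b, M a b ≠ 0 → b ∈ L) (hr : 0 < r)
    (hΦpos : ∀ b ∈ L, 0 < Φ b) (hΦ : ∀ b ∈ L, (M *ᵥ Φ) b ≤ r * Φ b) (f : A → ℝ) (a : A) :
    ∃ C > 0, ∀ᶠ n in atTop, (M ^ n *ᵥ f) a ≤ C * r ^ n := by
  obtain ⟨C, hC, hf⟩ : ∃ C, 0 ≤ C ∧ ∀ b ∈ L, f b ≤ C * Φ b := by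
    refine ⟨∑ b, |f b / Φ b|, Finset.sum_nonneg fun b _ => abs_nonneg _, fun b hb => ?_⟩
    rw [← div_le_iff₀ (hΦpos b hb)]
    exact (le_abs_self _).trans
      (Finset.single_le_sum (f := fun b => |f b / Φ b|) (fun b _ => abs_nonneg _)
        (Finset.mem_univ b))
  refine ⟨|C * (M *ᵥ Φ) a / r| + 1, by positivity, (eventually_ge_atTop 1).mono fun n hn => ?_⟩
  obtain ⟨n, rfl⟩ := Nat.exists_eq_add_of_le' hn
  calc (M ^ (n + 1) *ᵥ f) a = (M *ᵥ (M ^ n *ᵥ f)) a := by rw [pow_succ', mulVec_mulVec]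
    _ ≤ (M *ᵥ ((C * r ^ n) • Φ)) a :=
        mulVec_le_mulVec_of_le_on hM hL (pow_mulVec_le_on hM hL hr.le hC hΦ hf n) a
    _ = C * (M *ᵥ Φ) a / r * r ^ (n + 1) := by
        rw [mulVec_smul, Pi.smul_apply, smul_eq_mul]
        field_simp
        ring
    _ ≤ _ := by
        gcongr
        exact (le_abs_self _).trans (le_add_of_nonneg_right zero_le_one)

lemma pow_mul_le_pow_mulVec (hM : ∀ a b, 0 ≤ M a b) (hρ : 0 ≤ ρ)
    (hΨ : ∀ a, ρ * Ψ a ≤ (M *ᵥ Ψ) a) (hf : ∀ a, Ψ a ≤ f a) (n : ℕ) (a : A) :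
    ρ ^ n * Ψ a ≤ (M ^ n *ᵥ f) a := by
  induction n generalizing a with
  | zero => simpa using hf a
  | succ n ih =>
    calc ρ ^ (n + 1) * Ψ a = ρ ^ n * (ρ * Ψ a) := by ring
      _ ≤ ρ ^ n * (M *ᵥ Ψ) a := mul_le_mul_of_nonneg_left (hΨ a) (pow_nonneg hρ n)
      _ = (M *ᵥ (ρ ^ n • Ψ)) a := by rw [mulVec_smul, Pi.smul_apply, smul_eq_mul]
      _ ≤ (M *ᵥ (M ^ n *ᵥ f)) a :=
          mulVec_le_mulVec_of_le_on hM (fun _ b _ => Set.mem_univ b) (fun b _ => ih b) a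
      _ = (M ^ (n + 1) *ᵥ f) a := by rw [pow_succ', mulVec_mulVec]

lemma pow_mulVec_nonneg (hM : ∀ a b, 0 ≤ M a b) (hf : ∀ a, 0 ≤ f a) (n : ℕ) (a : A) :
    0 ≤ (M ^ n *ᵥ f) a := by
  simpa using pow_mul_le_pow_mulVec (ρ := 0) (Ψ := 0) hM le_rfl (by simp) hf n a

lemma exists_mul_pow_mulVec_le_of_reflTransGen (hM : ∀ a b, 0 ≤ M a b) (hf : ∀ a, 0 ≤ f a)
    {a b : A} (hab : Relation.ReflTransGen (fun a b => 0 < M a b) a b) :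
    ∃ c > 0, ∃ m, ∀ n, c * (M ^ n *ᵥ f) b ≤ (M ^ (m + n) *ᵥ f) a := by
  induction hab using Relation.ReflTransGen.head_induction_on with
  | refl => exact ⟨1, one_pos, 0, fun n => by simp⟩
  | @head a a' haa' _ ih =>
    obtain ⟨c, hc, m, hm⟩ := ih
    refine ⟨M a a' * c, mul_pos haa' hc, m + 1, fun n => ?_⟩
    calc M a a' * c * (M ^ n *ᵥ f) b ≤ M a a' * (M ^ (m + n) *ᵥ f) a' := by
          rw [mul_assoc]
          exact mul_le_mul_of_nonneg_left (hm n) haa'.le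
      _ ≤ (M *ᵥ (M ^ (m + n) *ᵥ f)) a :=
          Finset.single_le_sum (f := fun x => M a x * (M ^ (m + n) *ᵥ f) x)
            (fun x _ => mul_nonneg (hM a x) (pow_mulVec_nonneg hM hf _ x)) (Finset.mem_univ a')
      _ = (M ^ (m + 1 + n) *ᵥ f) a := by rw [mulVec_mulVec, ← pow_succ', add_right_comm]

lemma exists_le_pow_mulVec (hM : ∀ a b, 0 ≤ M a b) (hf : ∀ a, 0 ≤ f a) (hρ : 0 < ρ)
    (hΨ : ∀ a, ρ * Ψ a ≤ (M *ᵥ Ψ) a) (hΨf : ∀ a, Ψ a ≤ f a) {a b : A} (hb : 0 < Ψ b)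
    (hab : Relation.ReflTransGen (fun a b => 0 < M a b) a b) :
    ∃ c > 0, ∀ᶠ n in atTop, c * ρ ^ n ≤ (M ^ n *ᵥ f) a := by
  obtain ⟨c, hc, m, hm⟩ := exists_mul_pow_mulVec_le_of_reflTransGen hM hf hab
  refine ⟨c * Ψ b / ρ ^ m, by positivity, (eventually_ge_atTop m).mono fun n hn => ?_⟩
  obtain ⟨n, rfl⟩ := Nat.exists_eq_add_of_le hn
  calc c * Ψ b / ρ ^ m * ρ ^ (m + n) = c * (ρ ^ n * Ψ b) := by
        rw [pow_add]
        field_simp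
    _ ≤ c * (M ^ n *ᵥ f) b :=
        mul_le_mul_of_nonneg_left (pow_mul_le_pow_mulVec hM hρ.le hΨ hΨf n b) hc.le
    _ ≤ (M ^ (m + n) *ᵥ f) a := hm n

end MatrixPowers

/-! ### The walk with frozen reinforcement -/

section EdgeSets

variable {V : Type} {F F' : Finset (Sym2 V)}

/-- Any two vertices of the edge set `F` are joined by a path of edges of `F`. -/
def EdgeConnected (F : Finset (Sym2 V)) : Prop :=
  ∀ x y, memVerts F x → memVerts F y →
    (SimpleGraph.fromEdgeSet (↑F : Set (Sym2 V))).Reachable x y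

lemma memVerts_left {x y : V} (h : s(x, y) ∈ F) : memVerts F x := ⟨_, h, Sym2.mem_mk_left x y⟩

lemma memVerts_right {x y : V} (h : s(x, y) ∈ F) : memVerts F y := ⟨_, h, Sym2.mem_mk_right x y⟩

lemma memVerts.mono {x : V} (h : memVerts F x) (hFF' : F ⊆ F') : memVerts F' x :=
  let ⟨e, he, hx⟩ := h
  ⟨e, hFF' he, hx⟩

lemma EdgeConnected.induction (hF : EdgeConnected F) {P : V → Prop}
    (step : ∀ x y, s(x, y) ∈ F → P x → P y) {x y : V} (hx : memVerts F x) (hy : memVerts F y)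
    (hPx : P x) : P y := by
  obtain ⟨w⟩ := hF x y hx hy
  clear hx hy
  induction w with
  | nil => exact hPx
  | cons hadj _ ih => exact ih (step _ _ ((SimpleGraph.fromEdgeSet_adj _).1 hadj).1 hPx)

lemma EdgeConnected.exists_boundary_edge (hF : EdgeConnected F) (hF' : F'.Nonempty)
    (hssub : F' ⊂ F) : ∃ x y, memVerts F' x ∧ s(x, y) ∈ F ∧ s(x, y) ∉ F' := by
  by_contra! hclosed
  obtain ⟨e, he⟩ := hF'
  have hverts : ∀ z, memVerts F z → memVerts F' z := fun z hz =>
    hF.induction (P := memVerts F') (fun x y hxy hx => memVerts_right (hclosed x y hx hxy))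
      ⟨e, hssub.1 he, e.out_fst_mem⟩ hz ⟨e, he, e.out_fst_mem⟩
  refine hssub.2 fun e he => ?_
  induction e using Sym2.ind with
  | _ x y => exact hclosed x y (hverts x (memVerts_left he)) he

variable [DecidableEq V]

lemma EdgeConnected.insert_mk (hF : EdgeConnected F) {x : V} (hx : F.Nonempty → memVerts F x)
    (y : V) : EdgeConnected (insert s(x, y) F) := by
  set H := SimpleGraph.fromEdgeSet (↑(insert s(x, y) F) : Set (Sym2 V))
  have reachable_right : H.Reachable x y := by
    rcases eq_or_ne x y with rfl | hxy
    · rfl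
    · exact SimpleGraph.Adj.reachable ((SimpleGraph.fromEdgeSet_adj _).2 ⟨by simp, hxy⟩)
  have reachable_of_mem : ∀ z, memVerts (insert s(x, y) F) z → H.Reachable x z := by
    rintro z ⟨e, he, hz⟩
    rcases Finset.mem_insert.1 he with rfl | he
    · rcases Sym2.mem_iff.1 hz with rfl | rfl
      exacts [.rfl, reachable_right]
    · exact (hF x z (hx ⟨e, he⟩) ⟨e, he, hz⟩).mono
        (SimpleGraph.fromEdgeSet_mono (by simp))
  exact fun z w hz hw => (reachable_of_mem z hz).symm.trans (reachable_of_mem w hw)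

lemma gw_pos {δ : ℝ} (hδ : 0 < δ) (F : Finset (Sym2 V)) (e : Sym2 V) : 0 < gw δ F e := by
  rw [gw]
  split_ifs
  exacts [hδ, one_pos]

end EdgeSets

section FrozenWalk

variable {V : Type} [Fintype V] {G : SimpleGraph V} [DecidableRel G.Adj]
  {v₁ : V} {δ : ℝ} {F : Finset (Sym2 V)}

lemma nonempty_of_mem_scrS (hF : F ∈ scrS G v₁) : F.Nonempty :=
  let ⟨e, he, _⟩ := hF.2.1
  ⟨e, he⟩

lemma edgeConnected_of_mem_scrS (hF : F ∈ scrS G v₁) : EdgeConnected F := hF.2.2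

lemma edgeConnected_edgeFinset (hG : G.Preconnected) : EdgeConnected G.edgeFinset := by
  intro x y _ _
  rw [SimpleGraph.coe_edgeFinset, SimpleGraph.fromEdgeSet_edgeSet]
  exact hG x y

lemma edgeFinset_mem_scrS [Nontrivial V] (hG : G.Preconnected) (v₁ : V) :
    G.edgeFinset ∈ scrS G v₁ := by
  obtain ⟨y, hy⟩ := hG.exists_adj_of_nontrivial v₁
  exact ⟨subset_rfl, ⟨s(v₁, y), by simpa using hy, by simp⟩, edgeConnected_edgeFinset hG⟩

variable [DecidableEq V]

variable (G δ F) in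
/-- The total weight of the edges at `x` when the edges in `F` are reinforced; it is a reversible
measure for `phat G δ F`. -/
def totalWeight (x : V) : ℝ := ∑ z ∈ G.neighborFinset x, gw δ F s(x, z)

lemma totalWeight_nonneg (hδ : 0 < δ) (x : V) : 0 ≤ totalWeight G δ F x :=
  Finset.sum_nonneg fun _ _ => (gw_pos hδ _ _).le

lemma totalWeight_pos (hδ : 0 < δ) {x y : V} (hxy : G.Adj x y) : 0 < totalWeight G δ F x :=
  Finset.sum_pos (fun _ _ => gw_pos hδ _ _) ⟨y, (G.mem_neighborFinset x y).2 hxy⟩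

lemma phat_of_adj {x y : V} (hxy : G.Adj x y) :
    phat G δ F x y = gw δ F s(x, y) / totalWeight G δ F x := if_pos hxy

lemma phat_pos (hδ : 0 < δ) {x y : V} (hxy : G.Adj x y) : 0 < phat G δ F x y := by
  rw [phat_of_adj hxy]
  exact div_pos (gw_pos hδ _ _) (totalWeight_pos hδ hxy)

lemma adj_of_phat_ne_zero {x y : V} (h : phat G δ F x y ≠ 0) : G.Adj x y :=
  (ite_ne_right_iff.1 h).1

lemma phat_nonneg (hδ : 0 < δ) (x y : V) : 0 ≤ phat G δ F x y := by
  by_cases hxy : G.Adj x y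
  exacts [(phat_pos hδ hxy).le, (if_neg hxy).ge]

lemma sum_phat (hδ : 0 < δ) {x : V} (hx : ∃ y, G.Adj x y) : ∑ y, phat G δ F x y = 1 := by
  obtain ⟨y, hy⟩ := hx
  have hsum : ∑ y, phat G δ F x y
      = ∑ y ∈ G.neighborFinset x, gw δ F s(x, y) / totalWeight G δ F x := by
    rw [SimpleGraph.neighborFinset_eq_filter, Finset.sum_filter]
    rfl
  rw [hsum, ← Finset.sum_div, ← totalWeight, div_self (totalWeight_pos hδ hy).ne']

variable (G δ F) in
/-- The reinforced walk on `F`, killed when it leaves `F`. -/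
def killedKernel (x y : V) : ℝ := if s(x, y) ∈ F then phat G δ F x y else 0

lemma killedKernel_nonneg (hδ : 0 < δ) (x y : V) : 0 ≤ killedKernel G δ F x y := by
  rw [killedKernel]
  split_ifs
  exacts [phat_nonneg hδ x y, le_rfl]

lemma killedKernel_le_phat (hδ : 0 < δ) (x y : V) : killedKernel G δ F x y ≤ phat G δ F x y := by
  rw [killedKernel]
  split_ifs
  exacts [le_rfl, phat_nonneg hδ x y]

lemma killedKernel_pos (hδ : 0 < δ) (hF : F ⊆ G.edgeFinset) {x y : V} (hxy : s(x, y) ∈ F) :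
    0 < killedKernel G δ F x y := by
  rw [killedKernel, if_pos hxy]
  exact phat_pos hδ (SimpleGraph.mem_edgeFinset.1 (hF hxy))

lemma mem_of_killedKernel_ne_zero {x y : V} (h : killedKernel G δ F x y ≠ 0) : s(x, y) ∈ F :=
  (ite_ne_right_iff.1 h).1

lemma adj_of_killedKernel_ne_zero {x y : V} (h : killedKernel G δ F x y ≠ 0) : G.Adj x y :=
  adj_of_phat_ne_zero (ite_ne_right_iff.1 h).2

lemma reversible_killedKernel (hδ : 0 < δ) :
    Reversible (totalWeight G δ F) (killedKernel G δ F) := by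
  have flow : ∀ x y, totalWeight G δ F x * killedKernel G δ F x y
      = if s(x, y) ∈ F ∧ G.Adj x y then gw δ F s(x, y) else 0 := fun x y => by
    rw [killedKernel]
    by_cases hF : s(x, y) ∈ F
    · by_cases hxy : G.Adj x y
      · rw [if_pos hF, if_pos ⟨hF, hxy⟩, phat_of_adj hxy,
          mul_div_cancel₀ _ (totalWeight_pos hδ hxy).ne']
      · rw [if_pos hF, if_neg fun h => hxy h.2, phat, if_neg hxy, mul_zero]
    · rw [if_neg hF, if_neg fun h => hF h.1, mul_zero]
  intro x y
  simp only [flow, Sym2.eq_swap, G.adj_comm]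

lemma exists_isPerronPair_killedKernel (hadj : ∀ x, ∃ y, G.Adj x y) (hδ : 0 < δ)
    (hF : F ⊆ G.edgeFinset) (hne : F.Nonempty) :
    ∃ (φ : V → ℝ) (ρ : ℝ), IsPerronPair (killedKernel G δ F) φ ρ := by
  refine exists_isPerronPair_of_reversible (fun x => totalWeight_pos hδ (hadj x).choose_spec)
    (reversible_killedKernel hδ) (killedKernel_nonneg hδ) ?_
  obtain ⟨e, he⟩ := hne
  induction e using Sym2.ind with
  | _ x y => exact ⟨x, y, killedKernel_pos hδ hF he⟩

lemma sum_killedKernel_le_one (hadj : ∀ x, ∃ y, G.Adj x y) (hδ : 0 < δ) (x : V) :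
    ∑ y, killedKernel G δ F x y ≤ 1 :=
  (Finset.sum_le_sum fun y _ => killedKernel_le_phat hδ x y).trans_eq (sum_phat hδ (hadj x))

lemma sum_killedKernel_lt_one (hδ : 0 < δ) {x y : V} (hxy : G.Adj x y) (hF : s(x, y) ∉ F) :
    ∑ y, killedKernel G δ F x y < 1 := by
  refine (Finset.sum_lt_sum (fun y _ => killedKernel_le_phat hδ x y)
    ⟨y, Finset.mem_univ y, ?_⟩).trans_eq (sum_phat hδ ⟨y, hxy⟩)
  rw [killedKernel, if_neg hF]
  exact phat_pos hδ hxy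

namespace IsPerronPair

variable {φ : V → ℝ} {ρ : ℝ}

lemma memVerts_of_pos (h : IsPerronPair (killedKernel G δ F) φ ρ) {x : V} (hx : 0 < φ x) :
    memVerts F x := by
  obtain ⟨y, hy⟩ := h.exists_ne_zero_of_pos hx
  exact memVerts_left (mem_of_killedKernel_ne_zero hy)

lemma pos_of_memVerts (h : IsPerronPair (killedKernel G δ F) φ ρ) (hδ : 0 < δ)
    (hF : F ∈ scrS G v₁) {x : V} (hx : memVerts F x) : 0 < φ x := by
  obtain ⟨z, hz⟩ := h.exists_pos
  refine (edgeConnected_of_mem_scrS hF).induction (P := fun x => 0 < φ x) (fun x y hxy hφx => ?_)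
    (h.memVerts_of_pos hz) hx hz
  exact h.pos_of_pos (killedKernel_nonneg hδ) (killedKernel_pos hδ hF.1 (Sym2.eq_swap ▸ hxy)) hφx

lemma lt_one_of_ne_edgeFinset [Nontrivial V] (h : IsPerronPair (killedKernel G δ F) φ ρ)
    (hG : G.Preconnected) (hδ : 0 < δ) (hF : F ∈ scrS G v₁) (hne : F ≠ G.edgeFinset) : ρ < 1 := by
  obtain ⟨x, y, hx, hxy, hnot⟩ := (edgeConnected_edgeFinset hG).exists_boundary_edge
    (nonempty_of_mem_scrS hF) (hF.1.ssubset_of_ne hne)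
  have hadj : G.Adj x y := SimpleGraph.mem_edgeFinset.1 hxy
  exact h.eigenvalue_lt_one (totalWeight_nonneg hδ) (reversible_killedKernel hδ)
    (sum_killedKernel_le_one hG.exists_adj_of_nontrivial hδ) (h.pos_of_memVerts hδ hF hx)
    (totalWeight_pos hδ hadj) (sum_killedKernel_lt_one hδ hadj hnot)

end IsPerronPair

end FrozenWalk

/-! ### The pair of position and traversed edges, killed outside `𝒮₀` -/

section TraceChain

open Matrix

lemma ofFn_snoc {α : Type*} {n : ℕ} (f : Fin (n + 1) → α) (y : α) :
    List.ofFn (Fin.snoc (α := fun _ => α) f y : Fin (n + 2) → α) = List.ofFn f ++ [y] := by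
  rw [List.ofFn_succ', List.concat_eq_append]
  simp

variable {V : Type} [DecidableEq V]

lemma pathEdges_concat (l : List V) (x y : V) :
    pathEdges (l ++ [x] ++ [y]) = insert s(x, y) (pathEdges (l ++ [x])) := by
  induction l with
  | nil => simp [pathEdges]
  | cons a t ih =>
    cases t with
    | nil => simpa [pathEdges] using Finset.pair_comm _ _
    | cons b t =>
      simp only [List.cons_append, pathEdges] at ih ⊢
      rw [ih, Finset.insert_comm]

lemma pathEdges_ofFn_append {n : ℕ} (f : Fin (n + 1) → V) (y : V) :
    pathEdges (List.ofFn f ++ [y]) = insert s(f (Fin.last n), y) (pathEdges (List.ofFn f)) := by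
  rw [List.ofFn_succ', List.concat_eq_append, pathEdges_concat]

/-- The final state of a trajectory: the current position and the set of traversed edges. -/
def traceState {n : ℕ} (f : Fin (n + 1) → V) : V × Finset (Sym2 V) :=
  (f (Fin.last n), pathEdges (List.ofFn f))

lemma traceState_snoc {n : ℕ} (f : Fin (n + 1) → V) (y : V) :
    traceState (Fin.snoc (α := fun _ => V) f y : Fin (n + 2) → V)
      = (y, insert s((traceState f).1, y) (traceState f).2) := by
  rw [traceState, ofFn_snoc, pathEdges_ofFn_append, Fin.snoc_last]
  rfl

/-- The event `T_{𝒮₀} > n`, as a condition on the trajectory up to time `n`. -/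
def Survives (S0 : Set (Finset (Sym2 V))) (n : ℕ) (f : Fin (n + 1) → V) : Prop :=
  ∀ k, 1 ≤ k → k ≤ n → pathEdges ((List.ofFn f).take (k + 1)) ∈ S0

lemma survives_snoc {S0 : Set (Finset (Sym2 V))} {n : ℕ} (f : Fin (n + 1) → V) (y : V) :
    Survives S0 (n + 1) (Fin.snoc (α := fun _ => V) f y) ↔
      Survives S0 n f ∧ insert s((traceState f).1, y) (traceState f).2 ∈ S0 := by
  have take_init : ∀ k ≤ n, (List.ofFn f ++ [y]).take (k + 1) = (List.ofFn f).take (k + 1) :=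
    fun k hk => List.take_append_of_le_length (by simpa using hk)
  have take_all : (List.ofFn f ++ [y]).take (n + 1 + 1) = List.ofFn f ++ [y] :=
    List.take_of_length_le (by simp)
  simp only [Survives, traceState, ofFn_snoc, ← pathEdges_ofFn_append]
  constructor
  · refine fun h => ⟨fun k hk1 hkn => take_init k hkn ▸ h k hk1 (by omega), ?_⟩
    exact take_all ▸ h (n + 1) (by omega) le_rfl
  · rintro ⟨hinit, hlast⟩ k hk1 hkn
    rcases hkn.lt_or_eq with hk | rfl
    · rw [take_init k (by omega)]
      exact hinit k hk1 (by omega)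
    · rwa [take_all]

variable [Fintype V] {G : SimpleGraph V} [DecidableRel G.Adj] {δ : ℝ} {v₁ : V}
  {S0 : Set (Finset (Sym2 V))}

lemma trajProb_snoc {n : ℕ} (f : Fin (n + 1) → V) (y : V) :
    trajProb G δ v₁ (n + 1) (Fin.snoc (α := fun _ => V) f y)
      = trajProb G δ v₁ n f * phat G δ (traceState f).2 (traceState f).1 y := by
  have head : (Fin.snoc (α := fun _ => V) f y : Fin (n + 2) → V) 0 = f 0 :=
    Fin.snoc_castSucc (α := fun _ => V) (x := y) (p := f) (i := 0)
  have reverse_eq : (List.ofFn f).reverse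
      = f (Fin.last n) :: (List.ofFn fun i : Fin n => f i.castSucc).reverse := by
    rw [List.ofFn_succ', List.concat_eq_append, List.reverse_append]
    rfl
  rw [trajProb, trajProb, head, ite_mul, zero_mul, ofFn_snoc, List.reverse_append, reverse_eq]
  simp only [List.reverse_singleton, List.singleton_append, stepsProb]
  rw [← reverse_eq, List.reverse_reverse, mul_comm]
  rfl

variable (G δ S0) in
/-- The transition matrix of the pair (position, traversed edges), killed when the set of
traversed edges leaves `𝒮₀`. -/
def killedTransition : Matrix (V × Finset (Sym2 V)) (V × Finset (Sym2 V)) ℝ := fun a b =>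
  if b.2 = insert s(a.1, b.1) a.2 ∧ b.2 ∈ S0 then phat G δ a.2 a.1 b.1 else 0

lemma killedTransition_mulVec (Ψ : V × Finset (Sym2 V) → ℝ) (a : V × Finset (Sym2 V)) :
    (killedTransition G δ S0 *ᵥ Ψ) a =
      ∑ y, if insert s(a.1, y) a.2 ∈ S0 then
        phat G δ a.2 a.1 y * Ψ (y, insert s(a.1, y) a.2) else 0 := by
  rw [mulVec, dotProduct, Fintype.sum_prod_type]
  refine Finset.sum_congr rfl fun y _ => ?_
  rw [Finset.sum_eq_single (insert s(a.1, y) a.2)]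
  · simp [killedTransition]
  · intro F _ hF
    simp [killedTransition, hF]
  · simp

variable (G δ v₁ S0) in
/-- The expectation of `Ψ` at the state of the walk at time `n`, on the event `T_{𝒮₀} > n`. -/
def killedExpectation (n : ℕ) (Ψ : V × Finset (Sym2 V) → ℝ) : ℝ :=
  ∑ f : Fin (n + 1) → V, if Survives S0 n f then trajProb G δ v₁ n f * Ψ (traceState f) else 0

lemma killedExpectation_zero (Ψ : V × Finset (Sym2 V) → ℝ) :
    killedExpectation G δ v₁ S0 0 Ψ = Ψ (v₁, ∅) := by
  have survives_zero : ∀ f : Fin 1 → V, Survives S0 0 f := fun f k hk1 hk0 => by omega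
  rw [killedExpectation, ← (Equiv.funUnique (Fin 1) V).symm.sum_comp]
  simp [survives_zero, trajProb, stepsProb, pathEdges, traceState]

lemma killedExpectation_succ (n : ℕ) (Ψ : V × Finset (Sym2 V) → ℝ) :
    killedExpectation G δ v₁ S0 (n + 1) Ψ
      = killedExpectation G δ v₁ S0 n (killedTransition G δ S0 *ᵥ Ψ) := by
  rw [killedExpectation, ← (Fin.snocEquiv (fun _ : Fin (n + 2) => V)).sum_comp,
    Fintype.sum_prod_type, Finset.sum_comm]
  refine Finset.sum_congr rfl fun f _ => ?_
  change ∑ y, (if Survives S0 (n + 1) (Fin.snoc (α := fun _ => V) f y) then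
    trajProb G δ v₁ (n + 1) (Fin.snoc (α := fun _ => V) f y)
      * Ψ (traceState (Fin.snoc (α := fun _ => V) f y : Fin (n + 2) → V)) else 0) = _
  simp only [survives_snoc, trajProb_snoc, traceState_snoc, killedTransition_mulVec,
    Finset.mul_sum, ite_and, mul_ite, mul_zero, mul_assoc]
  split_ifs <;> simp

lemma killedExpectation_eq_pow_mulVec (n : ℕ) (Ψ : V × Finset (Sym2 V) → ℝ) :
    killedExpectation G δ v₁ S0 n Ψ = (killedTransition G δ S0 ^ n *ᵥ Ψ) (v₁, ∅) := by
  induction n generalizing Ψ with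
  | zero => simp [killedExpectation_zero]
  | succ n ih => rw [killedExpectation_succ, ih, mulVec_mulVec, ← pow_succ]

lemma probTgt_eq_pow_mulVec (n : ℕ) :
    probTgt G δ v₁ S0 n = (killedTransition G δ S0 ^ n *ᵥ 1) (v₁, ∅) := by
  rw [← killedExpectation_eq_pow_mulVec, probTgt, killedExpectation]
  simp only [Survives, Pi.one_apply, mul_one]

lemma killedTransition_nonneg (hδ : 0 < δ) (a b : V × Finset (Sym2 V)) :
    0 ≤ killedTransition G δ S0 a b := by
  rw [killedTransition]
  split_ifs
  exacts [phat_nonneg hδ _ _, le_rfl]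

lemma killedTransition_pos (hδ : 0 < δ) {x y : V} {F : Finset (Sym2 V)} (hxy : G.Adj x y)
    (hF : insert s(x, y) F ∈ S0) :
    0 < killedTransition G δ S0 (x, F) (y, insert s(x, y) F) := by
  rw [killedTransition, if_pos ⟨rfl, hF⟩]
  exact phat_pos hδ hxy

variable (S0) in
/-- The states at which the walk can be just after a step, on the event that it is still alive. -/
def liveStates : Set (V × Finset (Sym2 V)) := {b | b.2 ∈ S0 ∧ memVerts b.2 b.1}

lemma mem_liveStates_of_killedTransition_ne_zero {a b : V × Finset (Sym2 V)}
    (hab : killedTransition G δ S0 a b ≠ 0) : b ∈ liveStates S0 := by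
  obtain ⟨hb, hbS0⟩ := (ite_ne_right_iff.1 hab).1
  exact ⟨hbS0, memVerts_right (hb ▸ Finset.mem_insert_self _ _)⟩

lemma exists_pos_forall_mul_le {ι : Type*} [Finite ι] (f g : ι → ℝ) :
    ∃ m > 0, ∀ i, 0 < g i → m * f i ≤ g i := by
  have small : ∀ i, ∀ᶠ m in 𝓝[>] (0 : ℝ), 0 < g i → m * f i ≤ g i := fun i => by
    by_cases hi : 0 < g i
    · have lim : Tendsto (fun m => m * f i) (𝓝[>] 0) (𝓝 0) := by
        simpa using ((continuous_mul_const (f i)).tendsto 0).mono_left nhdsWithin_le_nhds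
      exact (lim.eventually (eventually_le_nhds hi)).mono fun m hm _ => hm
    · exact .of_forall fun m h => absurd h hi
  obtain ⟨m, hm, hm0⟩ := ((eventually_all.2 small).and self_mem_nhdsWithin).exists
  exact ⟨m, hm0, hm⟩

variable {φ : Finset (Sym2 V) → V → ℝ} {ρ : Finset (Sym2 V) → ℝ} {F : Finset (Sym2 V)}

/-- Since `|F|` grows whenever a new edge is crossed, giving the eigenfunctions `φ F` the weights
`m ^ |F|` with `m` small makes the gain from such crossings negligible against `r - ρ F`. -/
lemma exists_killedTransition_mulVec_le (hadj : ∀ x, ∃ y, G.Adj x y) (hδ : 0 < δ)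
    (hφ : ∀ F ∈ S0, IsPerronPair (killedKernel G δ F) (φ F) (ρ F))
    (hφpos : ∀ b ∈ liveStates S0, 0 < φ b.2 b.1) {r : ℝ} (hr : ∀ F ∈ S0, ρ F < r) :
    ∃ m > 0, ∀ b ∈ liveStates S0,
      (killedTransition G δ S0 *ᵥ fun a => m ^ a.2.card * φ a.2 a.1) b
        ≤ r * (m ^ b.2.card * φ b.2 b.1) := by
  obtain ⟨m, hm, hmφ⟩ := exists_pos_forall_mul_le
    (fun i : (V × Finset (Sym2 V)) × V × Finset (Sym2 V) => φ i.2.2 i.2.1)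
    (fun i => (r - ρ i.1.2) * φ i.1.2 i.1.1)
  refine ⟨m, hm, fun ⟨x, F⟩ hb => ?_⟩
  have gain_pos : 0 < (r - ρ F) * φ F x := mul_pos (sub_pos.2 (hr F hb.1)) (hφpos _ hb)
  have term_le : ∀ y, (if insert s(x, y) F ∈ S0 then
      phat G δ F x y * (m ^ (insert s(x, y) F).card * φ (insert s(x, y) F) y) else 0)
        ≤ m ^ F.card * (killedKernel G δ F x y * φ F y
          + phat G δ F x y * ((r - ρ F) * φ F x)) := fun y => by
    have hp : 0 ≤ phat G δ F x y := phat_nonneg hδ x y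
    by_cases hxy : s(x, y) ∈ F
    · rw [Finset.insert_eq_of_mem hxy, if_pos hb.1, killedKernel, if_pos hxy]
      nlinarith [mul_nonneg (pow_pos hm F.card).le (mul_nonneg hp gain_pos.le)]
    · rw [killedKernel, if_neg hxy, Finset.card_insert_of_notMem hxy, zero_mul, zero_add]
      split_ifs
      · rw [pow_succ, mul_assoc, mul_left_comm]
        exact mul_le_mul_of_nonneg_left (mul_le_mul_of_nonneg_left
          (hmφ ((x, F), y, insert s(x, y) F) gain_pos) hp) (pow_pos hm _).le
      · positivity
  calc _ = ∑ y, _ := killedTransition_mulVec _ _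
    _ ≤ _ := Finset.sum_le_sum fun y _ => term_le y
    _ = m ^ F.card * (ρ F * φ F x + (r - ρ F) * φ F x) := by
        rw [← Finset.mul_sum, Finset.sum_add_distrib, (hφ F hb.1).eigen, ← Finset.sum_mul,
          sum_phat hδ (hadj x), one_mul]
    _ = r * (m ^ F.card * φ F x) := by ring

lemma exists_probTgt_le (hadj : ∀ x, ∃ y, G.Adj x y) (hδ : 0 < δ) (hS0 : S0 ⊆ scrS G v₁)
    (hφ : ∀ F ∈ S0, IsPerronPair (killedKernel G δ F) (φ F) (ρ F)) {r : ℝ} (hr0 : 0 < r)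
    (hr : ∀ F ∈ S0, ρ F < r) :
    ∃ C > 0, ∀ᶠ n in atTop, probTgt G δ v₁ S0 n ≤ C * r ^ n := by
  have φ_pos : ∀ b ∈ liveStates S0, 0 < φ b.2 b.1 := fun b hb =>
    (hφ b.2 hb.1).pos_of_memVerts hδ (hS0 hb.1) hb.2
  obtain ⟨m, hm, hmφ⟩ := exists_killedTransition_mulVec_le hadj hδ hφ φ_pos hr
  simp only [probTgt_eq_pow_mulVec]
  exact exists_pow_mulVec_le (killedTransition_nonneg hδ)
    (fun a b hab => mem_liveStates_of_killedTransition_ne_zero hab) hr0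
    (fun b hb => mul_pos (pow_pos hm _) (φ_pos b hb)) hmφ 1 (v₁, ∅)

variable (G v₁) in
/-- The states which the walk started at `v₁` can occupy. -/
def IsExplored (a : V × Finset (Sym2 V)) : Prop :=
  a = (v₁, ∅) ∨ a.2 ∈ scrS G v₁ ∧ memVerts a.2 a.1

lemma IsExplored.insert_mem_scrS {x y : V} (h : IsExplored G v₁ (x, F)) (hxy : G.Adj x y) :
    insert s(x, y) F ∈ scrS G v₁ := by
  have mem_edges : s(x, y) ∈ G.edgeFinset := SimpleGraph.mem_edgeFinset.2 hxy
  rcases h with h | ⟨hF, hx⟩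
  · obtain ⟨rfl, rfl⟩ := Prod.mk.inj h
    exact ⟨by simpa using hxy, memVerts_left (Finset.mem_insert_self _ _),
      EdgeConnected.insert_mk (by simp [EdgeConnected, memVerts]) (by simp) y⟩
  · exact ⟨Finset.insert_subset mem_edges hF.1, memVerts.mono hF.2.1 (Finset.subset_insert _ _),
      (edgeConnected_of_mem_scrS hF).insert_mk (fun _ => hx) y⟩

variable (G v₁ δ S0 F) in
/-- `a` is reached with positive probability from `v₁` while crossing only edges of `F` and staying
alive. -/
structure ReachedWithin (a : V × Finset (Sym2 V)) : Prop where
  subset : a.2 ⊆ F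
  explored : IsExplored G v₁ a
  reached : Relation.ReflTransGen (fun a b => 0 < killedTransition G δ S0 a b) (v₁, ∅) a

namespace ReachedWithin

lemma start : ReachedWithin G δ v₁ S0 F (v₁, ∅) := ⟨Finset.empty_subset _, .inl rfl, .refl⟩

lemma memVerts {a : V × Finset (Sym2 V)} (h : ReachedWithin G δ v₁ S0 F a) (hF : F ∈ scrS G v₁) :
    memVerts F a.1 := by
  rcases h.explored with rfl | ⟨_, ha⟩
  exacts [hF.2.1, ha.mono h.subset]

lemma step {x y : V} {F' : Finset (Sym2 V)} (h : ReachedWithin G δ v₁ S0 F (x, F')) (hδ : 0 < δ)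
    (hdec : DecreasingIn G v₁ S0) (hF : F ∈ scrS G v₁) (hFS0 : F ∈ S0) (hxy : s(x, y) ∈ F) :
    ReachedWithin G δ v₁ S0 F (y, insert s(x, y) F') := by
  have hadj : G.Adj x y := SimpleGraph.mem_edgeFinset.1 (hF.1 hxy)
  have hins : insert s(x, y) F' ∈ scrS G v₁ := h.explored.insert_mem_scrS hadj
  have hsub : insert s(x, y) F' ⊆ F := Finset.insert_subset hxy h.subset
  exact ⟨hsub, .inr ⟨hins, memVerts_right (Finset.mem_insert_self _ _)⟩,
    h.reached.tail (killedTransition_pos hδ hadj (hdec _ F hins hF hsub hFS0))⟩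

lemma exists_at {x y : V} {F' : Finset (Sym2 V)} (h : ReachedWithin G δ v₁ S0 F (x, F'))
    (hδ : 0 < δ) (hdec : DecreasingIn G v₁ S0) (hF : F ∈ scrS G v₁) (hFS0 : F ∈ S0)
    (hy : ORRW.memVerts F y) : ∃ F'', F' ⊆ F'' ∧ ReachedWithin G δ v₁ S0 F (y, F'') := by
  refine (edgeConnected_of_mem_scrS hF).induction
    (P := fun z => ∃ F'', F' ⊆ F'' ∧ ReachedWithin G δ v₁ S0 F (z, F'')) ?_
    (h.memVerts hF) hy ⟨F', subset_rfl, h⟩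
  rintro z w hzw ⟨F'', hsub, hz⟩
  exact ⟨_, hsub.trans (Finset.subset_insert _ _), hz.step hδ hdec hF hFS0 hzw⟩

lemma exists_covering (hδ : 0 < δ) (hdec : DecreasingIn G v₁ S0) (hF : F ∈ scrS G v₁)
    (hFS0 : F ∈ S0) : ∃ x, ReachedWithin G δ v₁ S0 F (x, F) := by
  suffices ∀ T ⊆ F, ∃ x F', T ⊆ F' ∧ ReachedWithin G δ v₁ S0 F (x, F') by
    obtain ⟨x, F', hFF', h⟩ := this F subset_rfl
    exact ⟨x, (h.subset.antisymm hFF' : F' = F) ▸ h⟩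
  intro T
  induction T using Finset.induction_on with
  | empty => exact fun _ => ⟨v₁, ∅, subset_rfl, start⟩
  | insert e T _ ih =>
    intro hT
    obtain ⟨x, F', hTF', h⟩ := ih ((Finset.subset_insert _ _).trans hT)
    have he : e ∈ F := hT (Finset.mem_insert_self _ _)
    induction e using Sym2.ind with
    | _ u w =>
      obtain ⟨F'', hF'F'', h'⟩ := h.exists_at hδ hdec hF hFS0 (memVerts_left he)
      exact ⟨w, _, Finset.insert_subset_insert _ (hTF'.trans hF'F''), h'.step hδ hdec hF hFS0 he⟩

end ReachedWithin

lemma IsPerronPair.mul_le_killedTransition_mulVec {ψ : V → ℝ} {σ : ℝ}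
    (h : IsPerronPair (killedKernel G δ F) ψ σ) (hδ : 0 < δ) (hF : F ∈ S0)
    (a : V × Finset (Sym2 V)) :
    σ * (if a.2 = F then ψ a.1 else 0)
      ≤ (killedTransition G δ S0 *ᵥ fun a => if a.2 = F then ψ a.1 else 0) a := by
  obtain ⟨x, F'⟩ := a
  have nonneg : ∀ b : V × Finset (Sym2 V), 0 ≤ if b.2 = F then ψ b.1 else 0 := fun b => by
    split_ifs
    exacts [h.nonneg _, le_rfl]
  rcases eq_or_ne F' F with rfl | hne
  · rw [if_pos rfl, ← h.eigen, killedTransition_mulVec]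
    refine Finset.sum_le_sum fun y _ => ?_
    by_cases hxy : s(x, y) ∈ F'
    · rw [killedKernel, if_pos hxy, Finset.insert_eq_of_mem hxy, if_pos hF, if_pos rfl]
    · rw [killedKernel, if_neg hxy, zero_mul]
      split_ifs
      exacts [mul_nonneg (phat_nonneg hδ _ _) (h.nonneg _), (mul_zero _).ge, le_rfl]
  · rw [if_neg hne, mul_zero]
    exact Finset.sum_nonneg fun b _ => mul_nonneg (killedTransition_nonneg hδ _ _) (nonneg b)

lemma exists_le_probTgt {ψ : V → ℝ} {σ : ℝ} (h : IsPerronPair (killedKernel G δ F) ψ σ)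
    (hδ : 0 < δ) (hdec : DecreasingIn G v₁ S0) (hF : F ∈ scrS G v₁) (hFS0 : F ∈ S0) :
    ∃ c > 0, ∀ᶠ n in atTop, c * σ ^ n ≤ probTgt G δ v₁ S0 n := by
  obtain ⟨x, hx⟩ := ReachedWithin.exists_covering hδ hdec hF hFS0
  obtain ⟨m, hm, hmψ⟩ := exists_pos_forall_mul_le ψ 1
  have mψ_le : ∀ a : V × Finset (Sym2 V), (m • fun a => if a.2 = F then ψ a.1 else 0) a
      ≤ (1 : V × Finset (Sym2 V) → ℝ) a := fun a => by
    rw [Pi.smul_apply, smul_eq_mul, Pi.one_apply]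
    split_ifs
    exacts [hmψ a.1 one_pos, by simp]
  simp only [probTgt_eq_pow_mulVec]
  refine exists_le_pow_mulVec (killedTransition_nonneg hδ) (fun _ => zero_le_one)
    h.eigenvalue_pos (fun a => ?_) mψ_le ?_ hx.reached
  · rw [mulVec_smul, Pi.smul_apply, Pi.smul_apply, smul_eq_mul, smul_eq_mul, mul_left_comm]
    exact mul_le_mul_of_nonneg_left (h.mul_le_killedTransition_mulVec hδ hFS0 a) hm.le
  · rw [Pi.smul_apply, if_pos rfl]
    exact mul_pos hm (h.pos_of_memVerts hδ hF (hx.memVerts hF))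

end TraceChain

/-! ### The lifted directed graph -/

section LiftedGraph

variable {V : Type} [Fintype V] [LinearOrder V] {G : SimpleGraph V} [DecidableRel G.Adj]

lemma edge_eq_mk_zm_zp (z : VSet G) : z.1.1 = s(zm G z, zp G z) := by
  obtain ⟨⟨e, he⟩, b⟩ := z
  induction e using Sym2.ind with
  | _ x y =>
    rcases le_total x y with h | h <;> cases b <;> simp [zm, zp, sym2lo, sym2hi, h]

lemma adj_zm_zp (z : VSet G) : G.Adj (zm G z) (zp G z) := by
  rw [← SimpleGraph.mem_edgeSet, ← edge_eq_mk_zm_zp, ← SimpleGraph.mem_edgeFinset]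
  exact z.1.2

lemma injective_zm_zp : Function.Injective fun z : VSet G => (zm G z, zp G z) := by
  intro z w h
  obtain ⟨hm, hp⟩ := Prod.mk.inj h
  have hne := (adj_zm_zp z).ne
  obtain ⟨e, b⟩ := z
  obtain ⟨e', b'⟩ := w
  obtain rfl : e = e' := Subtype.ext <| by
    rw [edge_eq_mk_zm_zp (e, b), edge_eq_mk_zm_zp (e', b'), hm, hp]
  cases b <;> cases b' <;> simp_all [zm, zp]

lemma exists_zm_zp_eq {x y : V} (h : G.Adj x y) : ∃ z : VSet G, zm G z = x ∧ zp G z = y := by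
  refine ⟨(⟨s(x, y), by simpa using h⟩, decide (x < y)), ?_⟩
  rcases h.ne.lt_or_gt with hxy | hxy
  · simp [zm, zp, sym2lo, sym2hi, hxy, hxy.le]
  · simp [zm, zp, sym2lo, sym2hi, hxy.le, not_lt.2 hxy.le]

lemma sum_zm_zp {f : V → V → ℝ} (hf : ∀ x y, f x y ≠ 0 → G.Adj x y) :
    ∑ z : VSet G, f (zm G z) (zp G z) = ∑ x, ∑ y, f x y := by
  rw [← Fintype.sum_prod_type']
  refine Fintype.sum_of_injective _ injective_zm_zp _ _ (fun p hp => ?_) fun z => rfl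
  by_contra hne
  obtain ⟨z, hz₁, hz₂⟩ := exists_zm_zp_eq (hf p.1 p.2 hne)
  exact hp ⟨z, Prod.ext hz₁ hz₂⟩

variable (G) in
/-- The kernel on oriented edges that moves the head of the current edge according to `K`. -/
def liftKernel (K : V → V → ℝ) (z w : VSet G) : ℝ :=
  if zp G z = zm G w then K (zm G w) (zp G w) else 0

variable {K p Q : V → V → ℝ} {φ ν : V → ℝ} {ρ : ℝ}

lemma liftKernel_nonneg (hK : ∀ x y, 0 ≤ K x y) (z w : VSet G) : 0 ≤ liftKernel G K z w := by
  rw [liftKernel]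
  split_ifs
  exacts [hK _ _, le_rfl]

lemma sum_liftKernel_mul (hK : ∀ x y, K x y ≠ 0 → G.Adj x y) (f : V → ℝ) (z : VSet G) :
    ∑ w, liftKernel G K z w * f (zp G w) = ∑ y, K (zp G z) y * f y := by
  have hf : ∀ x y, (if zp G z = x then K x y else 0) * f y ≠ 0 → G.Adj x y := fun x y h =>
    hK x y (ite_ne_right_iff.1 (left_ne_zero_of_mul h)).2
  calc ∑ w, liftKernel G K z w * f (zp G w)
      = ∑ x, ∑ y, (if zp G z = x then K x y else 0) * f y := sum_zm_zp hf
    _ = _ := by rw [Finset.sum_comm]; simp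

lemma sum_liftKernel (hK : ∀ x y, K x y ≠ 0 → G.Adj x y) (z : VSet G) :
    ∑ w, liftKernel G K z w = ∑ y, K (zp G z) y := by
  simpa using sum_liftKernel_mul hK 1 z

lemma liftKernel_mem_TS (hQ : ∀ x y, 0 ≤ Q x y) (hQ1 : ∀ x, ∑ y, Q x y = 1)
    (hadj : ∀ x y, Q x y ≠ 0 → G.Adj x y) : liftKernel G Q ∈ TS G :=
  ⟨liftKernel_nonneg hQ, fun z => (sum_liftKernel hadj z).trans (hQ1 _),
    fun _ _ h => (ite_ne_right_iff.1 h).1⟩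

lemma IsPerronPair.liftKernel (h : IsPerronPair K φ ρ) (hK : ∀ x y, K x y ≠ 0 → G.Adj x y) :
    IsPerronPair (liftKernel G K) (fun z => φ (zp G z)) ρ where
  nonneg z := h.nonneg _
  exists_pos := by
    obtain ⟨x, hx⟩ := h.exists_pos
    obtain ⟨y, hxy⟩ := h.exists_ne_zero_of_pos hx
    obtain ⟨z, -, rfl⟩ := exists_zm_zp_eq (hK x y hxy).symm
    exact ⟨z, hx⟩
  eigenvalue_pos := h.eigenvalue_pos
  eigen z := (sum_liftKernel_mul hK φ z).trans (h.eigen _)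

lemma doobTransform_liftKernel :
    doobTransform (liftKernel G K) (liftKernel G p) (fun z => φ (zp G z)) ρ
      = liftKernel G (doobTransform K p φ ρ) := by
  ext z w
  by_cases hzw : zp G z = zm G w <;> simp [doobTransform, liftKernel, hzw]

variable (G) in
/-- The law of an edge crossed by the chain with kernel `Q` whose initial law is `ν`. -/
def liftMeasure (ν : V → ℝ) (Q : V → V → ℝ) (z : VSet G) : ℝ := ν (zm G z) * Q (zm G z) (zp G z)

lemma sum_liftMeasure (hQ1 : ∀ x, ∑ y, Q x y = 1) (hadj : ∀ x y, Q x y ≠ 0 → G.Adj x y) :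
    ∑ z, liftMeasure G ν Q z = ∑ x, ν x := by
  have hf : ∀ x y, ν x * Q x y ≠ 0 → G.Adj x y := fun x y h => hadj x y (right_ne_zero_of_mul h)
  refine (sum_zm_zp hf).trans (Finset.sum_congr rfl fun x _ => ?_)
  rw [← Finset.mul_sum, hQ1, mul_one]

lemma Invariant.liftMeasure (hinv : Invariant ν Q) (hadj : ∀ x y, Q x y ≠ 0 → G.Adj x y) :
    Invariant (liftMeasure G ν Q) (liftKernel G Q) := by
  intro w
  have hf : ∀ x y, ν x * Q x y * (if y = zm G w then Q (zm G w) (zp G w) else 0) ≠ 0 →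
      G.Adj x y := fun x y h => hadj x y (right_ne_zero_of_mul (left_ne_zero_of_mul h))
  calc ∑ z, ORRW.liftMeasure G ν Q z * liftKernel G Q z w
      = ∑ x, ∑ y, ν x * Q x y * (if y = zm G w then Q (zm G w) (zp G w) else 0) := sum_zm_zp hf
    _ = ∑ x, ν x * Q x (zm G w) * Q (zm G w) (zp G w) := by simp
    _ = ORRW.liftMeasure G ν Q w := by rw [← Finset.sum_mul, hinv]; rfl

variable {v₁ : V} {δ : ℝ} {F : Finset (Sym2 V)}

lemma pS_eq_liftKernel : pS G δ F = liftKernel G (phat G δ F) := by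
  have sum_weights : ∀ x, ∑ w : VSet G, (if x = zm G w then gw δ F w.1.1 else 0)
      = totalWeight G δ F x := fun x => by
    have hf : ∀ x' y, (if x = x' ∧ G.Adj x' y then gw δ F s(x', y) else 0) ≠ 0 → G.Adj x' y :=
      fun x' y h => (ite_ne_right_iff.1 h).1.2
    calc ∑ w : VSet G, (if x = zm G w then gw δ F w.1.1 else 0)
        = ∑ w : VSet G, if x = zm G w ∧ G.Adj (zm G w) (zp G w) then
            gw δ F s(zm G w, zp G w) else 0 := by
          simp only [adj_zm_zp, and_true, ← edge_eq_mk_zm_zp]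
      _ = ∑ x', ∑ y, if x = x' ∧ G.Adj x' y then gw δ F s(x', y) else 0 := sum_zm_zp hf
      _ = totalWeight G δ F x := by
          rw [Finset.sum_comm, totalWeight, SimpleGraph.neighborFinset_eq_filter,
            Finset.sum_filter]
          simp [ite_and]
  ext z w
  rw [pS, liftKernel, sum_weights, phat_of_adj (adj_zm_zp w), ← edge_eq_mk_zm_zp]
  split_ifs with hzw
  · rw [hzw]
  · rfl

lemma eq_zero_of_pS_eq_zero (hδ : 0 < δ) {q : VSet G → VSet G → ℝ} (hq : q ∈ TS G) {z w : VSet G}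
    (hzw : pS G δ F z w = 0) : q z w = 0 := by
  by_contra hne
  rw [pS_eq_liftKernel, liftKernel, if_pos (hq.2.2 z w hne)] at hzw
  exact (phat_pos hδ (adj_zm_zp w)).ne' hzw

namespace IsPerronPair

lemma neg_log_le_entropyRate_pS (h : IsPerronPair (killedKernel G δ F) φ ρ) (hδ : 0 < δ)
    (hF : F ∈ scrS G v₁) {μ : ProbMeas (VSet G)} (hμ : ∀ z, μ.1 z ≠ 0 → z.1.1 ∈ F)
    {q : VSet G → VSet G → ℝ} (hq : q ∈ TS G) (hinv : Invariant μ.1 q) :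
    -Real.log ρ ≤ entropyRate μ.1 q (pS G δ F) := by
  refine (h.liftKernel fun x y => adj_of_killedKernel_ne_zero).neg_log_le_entropyRate
    (liftKernel_nonneg (killedKernel_nonneg hδ)) μ.2.1 μ.2.2 hq.1 hq.2.1 hinv
    (fun z w => eq_zero_of_pS_eq_zero hδ hq) (fun z hz => ?_) fun z w _ hw => ?_
  · exact h.pos_of_memVerts hδ hF (memVerts_right (edge_eq_mk_zm_zp z ▸ hμ z hz))
  · have hwF : s(zm G w, zp G w) ∈ F := edge_eq_mk_zm_zp w ▸ hμ w hw
    rw [pS_eq_liftKernel, ORRW.liftKernel, ORRW.liftKernel, killedKernel, if_pos hwF]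

lemma exists_entropyRate_pS_eq (h : IsPerronPair (killedKernel G δ F) φ ρ)
    (hadj : ∀ x, ∃ y, G.Adj x y) (hδ : 0 < δ) :
    ∃ (μ : ProbMeas (VSet G)) (q : VSet G → VSet G → ℝ), (∀ z, μ.1 z ≠ 0 → z.1.1 ∈ F) ∧
      q ∈ TS G ∧ Invariant μ.1 q ∧ entropyRate μ.1 q (pS G δ F) = -Real.log ρ := by
  set Q := doobTransform (killedKernel G δ F) (phat G δ F) φ ρ with Q_def
  have Q_nonneg : ∀ x y, 0 ≤ Q x y :=
    h.doobTransform_nonneg (killedKernel_nonneg hδ) (phat_nonneg hδ)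
  have Q_sum : ∀ x, ∑ y, Q x y = 1 := h.sum_doobTransform fun x => sum_phat hδ (hadj x)
  have mem_of_pos : ∀ x y, 0 < φ x → Q x y ≠ 0 → s(x, y) ∈ F := fun x y hx hxy => by
    rw [Q_def, doobTransform, if_neg hx.ne'] at hxy
    exact mem_of_killedKernel_ne_zero (left_ne_zero_of_mul (div_ne_zero_iff.1 hxy).1)
  have Q_adj : ∀ x y, Q x y ≠ 0 → G.Adj x y := fun x y hxy => by
    rw [Q_def, doobTransform] at hxy
    split_ifs at hxy
    · exact adj_of_phat_ne_zero hxy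
    · exact adj_of_killedKernel_ne_zero (left_ne_zero_of_mul (div_ne_zero_iff.1 hxy).1)
  obtain ⟨ν, hinv, hφ⟩ := h.exists_invariant_doobTransform
    (fun x => totalWeight_pos hδ (hadj x).choose_spec) (reversible_killedKernel hδ) (phat G δ F)
  let μ : ProbMeas (VSet G) := ⟨liftMeasure G ν.1 Q,
    fun z => mul_nonneg (ν.2.1 _) (Q_nonneg _ _), (sum_liftMeasure Q_sum Q_adj).trans ν.2.2⟩
  have μ_inv : Invariant μ.1 (ORRW.liftKernel G Q) := hinv.liftMeasure Q_adj
  refine ⟨μ, ORRW.liftKernel G Q, fun z hz => ?_, liftKernel_mem_TS Q_nonneg Q_sum Q_adj, μ_inv, ?_⟩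
  · rw [edge_eq_mk_zm_zp]
    exact mem_of_pos _ _ (hφ _ (left_ne_zero_of_mul hz)) (right_ne_zero_of_mul hz)
  · rw [pS_eq_liftKernel]
    rw [← doobTransform_liftKernel] at μ_inv ⊢
    refine (h.liftKernel fun x y => adj_of_killedKernel_ne_zero).entropyRate_doobTransform μ.2.2
      (fun z => (sum_liftKernel (fun x y => adj_of_phat_ne_zero) z).trans (sum_phat hδ (hadj _)))
      μ_inv (fun z hz => ?_) fun z w hzw => ?_
    · exact hφ _ (hinv.ne_zero_of_ne_zero ν.2.1 Q_nonneg (left_ne_zero_of_mul hz)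
        (right_ne_zero_of_mul hz))
    · obtain ⟨hzw, hK⟩ := ite_ne_right_iff.1 hzw
      simp only [ORRW.liftKernel, if_pos hzw]
      exact if_pos (mem_of_killedKernel_ne_zero hK)

end IsPerronPair

end LiftedGraph

/-! ### Growing edge sets -/

section EdgeGrowth

variable {V : Type} [DecidableEq V] {E F T T' : Finset (Sym2 V)}

/-- `T'` arises from `T` by adding one new edge, adjacent to an edge of `T`. -/
def IsOneEdgeExtension (T T' : Finset (Sym2 V)) : Prop :=
  ∃ e ∉ T, (∃ e' ∈ T, edgeAdj e e') ∧ insert e T = T'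

namespace IsOneEdgeExtension

lemma ssubset (h : IsOneEdgeExtension T T') : T ⊂ T' := by
  obtain ⟨e, he, -, rfl⟩ := h
  exact Finset.ssubset_insert he

lemma card_eq (h : IsOneEdgeExtension T T') : T'.card = T.card + 1 := by
  obtain ⟨e, he, -, rfl⟩ := h
  exact Finset.card_insert_of_notMem he

lemma exists_edgeAdj (h : IsOneEdgeExtension T T') {e : Sym2 V} (he : e ∈ T' \ T) :
    ∃ e' ∈ T, edgeAdj e e' := by
  obtain ⟨e₀, he₀, hadj, rfl⟩ := h
  rw [Finset.insert_sdiff_of_notMem _ he₀, Finset.sdiff_self, Finset.mem_insert] at he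
  obtain rfl : e = e₀ := by simpa using he
  exact hadj

end IsOneEdgeExtension

lemma EdgeConnected.exists_isOneEdgeExtension (hF : EdgeConnected F) (hT : T.Nonempty)
    (hTF : T ⊂ F) : ∃ T' ⊆ F, IsOneEdgeExtension T T' := by
  obtain ⟨x, y, ⟨e', he', hx⟩, hxy, hnot⟩ := hF.exists_boundary_edge hT hTF
  exact ⟨insert s(x, y) T, Finset.insert_subset hxy hTF.1,
    s(x, y), hnot, ⟨e', he', x, Sym2.mem_mk_left x y, hx⟩, rfl⟩

/-- Comparability with `F` is kept by exhausting `F` before adding any edge outside it. -/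
lemma EdgeConnected.exists_isOneEdgeExtension_comparable (hE : EdgeConnected E)
    (hF : EdgeConnected F) (hFE : F ⊆ E) (hT : T.Nonempty) (hTE : T ⊂ E)
    (hTF : T ⊆ F ∨ F ⊆ T) :
    ∃ T' ⊆ E, (T' ⊆ F ∨ F ⊆ T') ∧ IsOneEdgeExtension T T' := by
  by_cases hFT : F ⊆ T
  · obtain ⟨T', hT'E, hext⟩ := hE.exists_isOneEdgeExtension hT hTE
    exact ⟨T', hT'E, .inr (hFT.trans hext.ssubset.1), hext⟩
  · obtain ⟨T', hT'F, hext⟩ := hF.exists_isOneEdgeExtension hT ⟨hTF.resolve_right hFT, hFT⟩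
    exact ⟨T', hT'F.trans hFE, .inl hT'F, hext⟩

lemma EdgeConnected.exists_growing_seq (hE : EdgeConnected E) (hF : EdgeConnected F)
    (hFE : F ⊆ E) {e : Sym2 V} (he : e ∈ F) :
    ∃ T : ℕ → Finset (Sym2 V), T 0 = {e} ∧
      (∀ n < E.card, (T n).card = n + 1 ∧ T n ⊆ E ∧ (T n ⊆ F ∨ F ⊆ T n)) ∧
      ∀ n, n + 1 < E.card → IsOneEdgeExtension (T n) (T (n + 1)) := by
  choose! next next_subset next_comparable next_ext using fun T =>
    hE.exists_isOneEdgeExtension_comparable hF hFE (T := T)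
  have proper : ∀ {T : Finset (Sym2 V)} {n}, n + 1 < E.card → T.card = n + 1 → T ⊆ E →
      T.Nonempty ∧ T ⊂ E := fun {T n} hn hcard hTE =>
    ⟨Finset.card_pos.1 (by omega), hTE.ssubset_of_ne (by rintro rfl; omega)⟩
  have grows : ∀ n < E.card, (next^[n] {e}).card = n + 1 ∧ next^[n] {e} ⊆ E ∧
      (next^[n] {e} ⊆ F ∨ F ⊆ next^[n] {e}) := by
    intro n hn
    induction n with
    | zero => exact ⟨rfl, by simpa using hFE he, .inl (by simpa using he)⟩
    | succ n ih =>
      obtain ⟨hcard, hTE, hTF⟩ := ih (by omega)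
      obtain ⟨hT, hTE⟩ := proper hn hcard hTE
      rw [Function.iterate_succ_apply']
      exact ⟨by rw [(next_ext _ hT hTE hTF).card_eq, hcard], next_subset _ hT hTE hTF,
        next_comparable _ hT hTE hTF⟩
  refine ⟨fun n => next^[n] {e}, rfl, grows, fun n hn => ?_⟩
  obtain ⟨hcard, hTE, hTF⟩ := grows n (by omega)
  obtain ⟨hT, hTE⟩ := proper hn hcard hTE
  simpa only [Function.iterate_succ_apply'] using next_ext _ hT hTE hTF

lemma exists_seqE_eq [Fintype V] {G : SimpleGraph V} [DecidableRel G.Adj] {v₁ : V}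
    (hG : G.Preconnected) (hF : F ∈ scrS G v₁) : ∃ Es ∈ seqE G v₁, ∃ k, Es k = F := by
  obtain ⟨e, he, hv₁⟩ := hF.2.1
  obtain ⟨T, T_zero, hT, T_ext⟩ := (edgeConnected_edgeFinset hG).exists_growing_seq
    (edgeConnected_of_mem_scrS hF) hF.1 he
  have card_pos : 0 < F.card := Finset.card_pos.2 ⟨e, he⟩
  have card_le : F.card ≤ G.edgeFinset.card := Finset.card_le_card hF.1
  refine ⟨fun k => T k, ⟨fun k => (hT k k.2).2.1, fun k => (hT k k.2).1, fun k l hkl => ?_,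
    fun k hk => ⟨e, by simp [hk, T_zero], hv₁⟩, fun k l hkl e he => ?_⟩,
    ⟨F.card - 1, by omega⟩, ?_⟩
  · simp only [← hkl]
    exact (T_ext k (by omega)).ssubset
  · simp only [← hkl] at he
    exact (T_ext k (by omega)).exists_edgeAdj he
  · obtain ⟨hcard, -, hsub | hsub⟩ := hT (F.card - 1) (by omega)
    · exact Finset.eq_of_subset_of_card_le hsub (hcard.ge.trans' (by omega))
    · exact (Finset.eq_of_subset_of_card_le hsub (by omega)).symm

end EdgeGrowth

/-! ### The infimum of the rate function -/

section RateFunction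

variable {V : Type} [Fintype V] [LinearOrder V] {G : SimpleGraph V} [DecidableRel G.Adj]
  {v₁ : V} {δ : ℝ} {S0 : Set (Finset (Sym2 V))} {F : Finset (Sym2 V)}

lemma neg_log_le_Lam {φ : Finset (Sym2 V) → V → ℝ} {ρ : Finset (Sym2 V) → ℝ} {σ : ℝ}
    (hδ : 0 < δ) (hS0 : S0 ⊆ scrS G v₁)
    (hφ : ∀ F ∈ S0, IsPerronPair (killedKernel G δ F) (φ F) (ρ F)) (hσ : ∀ F ∈ S0, ρ F ≤ σ)
    (μ : ProbMeas (VSet G)) : ((-Real.log σ : ℝ) : EReal) ≤ Lam G v₁ δ S0 μ := by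
  refine le_sInf ?_
  rintro _ ⟨μs, r, Es, qs, -, r_nonneg, r_off, r_sum, hsupp, -, hqs, hinv, rfl⟩
  rw [sum_mul_relEntInt_eq_coe r fun k z w => eq_zero_of_pS_eq_zero hδ (hqs k),
    EReal.coe_le_coe_iff]
  calc -Real.log σ = ∑ k, r k * -Real.log σ := by rw [← Finset.sum_mul, r_sum, one_mul]
    _ ≤ _ := Finset.sum_le_sum fun k _ => ?_
  by_cases hk : Es k ∈ S0
  · refine mul_le_mul_of_nonneg_left ?_ (r_nonneg k)
    calc -Real.log σ ≤ -Real.log (ρ (Es k)) :=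
          neg_le_neg (Real.log_le_log (hφ _ hk).eigenvalue_pos (hσ _ hk))
      _ ≤ _ := (hφ _ hk).neg_log_le_entropyRate_pS hδ (hS0 hk) (hsupp k) (hqs k) (hinv k)
  · rw [r_off k hk, zero_mul, zero_mul]

lemma IsPerronPair.exists_Lam_le [Nontrivial V] {φ : V → ℝ} {ρ : ℝ}
    (h : IsPerronPair (killedKernel G δ F) φ ρ) (hG : G.Preconnected) (hδ : 0 < δ)
    (hF : F ∈ scrS G v₁) (hFS0 : F ∈ S0) :
    ∃ μ ∈ CC G S0, Lam G v₁ δ S0 μ ≤ ((-Real.log ρ : ℝ) : EReal) := by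
  have hadj := hG.exists_adj_of_nontrivial
  obtain ⟨Es, hEs, k₀, hk₀⟩ := exists_seqE_eq hG hF
  have optimal : ∀ k, ∃ (μ : ProbMeas (VSet G)) (q : VSet G → VSet G → ℝ),
      (∀ z, μ.1 z ≠ 0 → z.1.1 ∈ Es k) ∧ q ∈ TS G ∧ Invariant μ.1 q ∧
        (k = k₀ → entropyRate μ.1 q (pS G δ (Es k)) = -Real.log ρ) := by
    intro k
    by_cases hk : k = k₀
    · subst hk
      obtain ⟨μ, q, hμ, hq, hinv, hrate⟩ := h.exists_entropyRate_pS_eq hadj hδ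
      exact ⟨μ, q, hk₀ ▸ hμ, hq, hinv, fun _ => hk₀ ▸ hrate⟩
    · have hne : (Es k).Nonempty := Finset.card_pos.1 (by rw [hEs.2.1 k]; omega)
      obtain ⟨_, _, hk'⟩ := exists_isPerronPair_killedKernel hadj hδ (hEs.1 k) hne
      obtain ⟨μ, q, hμ, hq, hinv, -⟩ := hk'.exists_entropyRate_pS_eq hadj hδ
      exact ⟨μ, q, hμ, hq, hinv, fun h => absurd h hk⟩
  choose μs qs hsupp hqs hinv hrate using optimal
  refine ⟨μs k₀, ⟨F, hFS0, hk₀ ▸ hsupp k₀⟩,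
    sInf_le ⟨μs, Pi.single k₀ 1, Es, qs, hEs, ?_, ?_, ?_, hsupp, ?_, hqs, hinv, ?_⟩⟩
  · exact fun k => by rw [Pi.single_apply]; positivity
  · exact fun k hk => Pi.single_eq_of_ne (by rintro rfl; exact hk (hk₀ ▸ hFS0)) _
  · exact Fintype.sum_pi_single' k₀ 1
  · simp [Pi.single_apply]
  · rw [sum_mul_relEntInt_eq_coe _ fun k z w => eq_zero_of_pS_eq_zero hδ (hqs k)]
    simp [Pi.single_apply, hrate k₀ rfl]

lemma sInf_Lam_eq_neg_log [Nontrivial V] {φ : Finset (Sym2 V) → V → ℝ}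
    {ρ : Finset (Sym2 V) → ℝ} (hG : G.Preconnected) (hδ : 0 < δ) (hS0 : S0 ⊆ scrS G v₁)
    (hφ : ∀ F ∈ S0, IsPerronPair (killedKernel G δ F) (φ F) (ρ F))
    (hF : F ∈ S0) (hmax : ∀ F' ∈ S0, ρ F' ≤ ρ F) :
    sInf (Lam G v₁ δ S0 '' CC G S0) = ((-Real.log (ρ F) : ℝ) : EReal) := by
  refine le_antisymm ?_ (le_sInf ?_)
  · obtain ⟨μ, hμ, hle⟩ := (hφ F hF).exists_Lam_le hG hδ (hS0 hF) hF
    exact (sInf_le (Set.mem_image_of_mem _ hμ)).trans hle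
  · rintro _ ⟨μ, -, rfl⟩
    exact neg_log_le_Lam hδ hS0 hφ hmax μ

end RateFunction

/-- `inf_{μ ∈ 𝒞(𝒮₀)} Λ_{δ,𝒮₀}(μ) ∈ (0, ∞)` and
`(1/n) log P_{v₁}(T_{𝒮₀} > n) → − inf_{μ ∈ 𝒞(𝒮₀)} Λ_{δ,𝒮₀}(μ)`. -/
theorem orrw_tail_decay_Lam {V : Type} [Fintype V] [LinearOrder V]
    (G : SimpleGraph V) [DecidableRel G.Adj] (hG : G.Connected)
    (hV : 3 ≤ Fintype.card V) (v₁ : V) (δ : ℝ) (hδ : 0 < δ)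
    (S0 : Set (Finset (Sym2 V))) (hS0ne : S0.Nonempty) (hS0sub : S0 ⊆ scrS G v₁)
    (hS0dec : DecreasingIn G v₁ S0) (hS0ne' : S0 ≠ scrS G v₁) :
    ∃ a : ℝ, sInf (Lam G v₁ δ S0 '' CC G S0) = ((a : ℝ) : EReal) ∧ 0 < a ∧
      Tendsto (fun n : ℕ => Real.log (probTgt G δ v₁ S0 n) / n) atTop (nhds (-a)) := by
  have : Nontrivial V := Fintype.one_lt_card_iff_nontrivial.1 (by omega)
  have hconn := hG.preconnected
  have hadj := hconn.exists_adj_of_nontrivial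
  have edgeFinset_notMem : G.edgeFinset ∉ S0 := fun hE => hS0ne' <| hS0sub.antisymm fun F hF =>
    hS0dec F _ hF (edgeFinset_mem_scrS hconn v₁) hF.1 hE
  choose! φ ρ hφ using fun F (hF : F ∈ S0) => exists_isPerronPair_killedKernel hadj hδ
    (hS0sub hF).1 (nonempty_of_mem_scrS (hS0sub hF))
  obtain ⟨F, hF, hmax⟩ := Set.exists_max_image S0 ρ (Set.toFinite _) hS0ne
  have ρ_pos : 0 < ρ F := (hφ F hF).eigenvalue_pos
  have ρ_lt_one : ρ F < 1 := (hφ F hF).lt_one_of_ne_edgeFinset hconn hδ (hS0sub hF)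
    (ne_of_mem_of_not_mem hF edgeFinset_notMem)
  refine ⟨-Real.log (ρ F), sInf_Lam_eq_neg_log hconn hδ hS0sub hφ hF hmax,
    neg_pos.2 (Real.log_neg ρ_pos ρ_lt_one), ?_⟩
  rw [neg_neg]
  exact tendsto_log_div_of_geometric_bounds ρ_pos
    (exists_le_probTgt (hφ F hF) hδ hS0dec (hS0sub hF) hF) fun r hr =>
    exists_probTgt_le hadj hδ hS0sub hφ (ρ_pos.trans hr) fun F' hF' => (hmax F' hF').trans_lt hr

end ORRW
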